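/- arXiv:1212.0615 — 16 statements merged into one kernel-verified Lean document; each statement's English description precedes it below -/
import Mathlib

section
/- Let A be a unital alternative ring. If a, b ∈ A are invertible with inverses a⁻¹ and b⁻¹ respectively, then the product a*b is invertible, and its inverse is b⁻¹*a⁻¹; that is, (b⁻¹*a⁻¹)*(a*b) = 1 and (a*b)*(b⁻¹*a⁻¹) = 1. -/
/-- An element of a unital (not necessarily associative) ring is invertible if it has
a two-sided inverse. -/
def IsInv {A : Type*} [NonAssocRing A] (a : A) : Prop :=
  ∃ b : A, a * b = 1 ∧ b * a = 1

section Aux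
variable {A : Type*} [NonAssocRing A]

lemma aux_linL (alt1 : ∀ x y : A, (x * x) * y = x * (x * y)) (x y z : A) :
    (x * y) * z + (y * x) * z = x * (y * z) + y * (x * z) := by
  have h := alt1 (x + y) z
  simp only [add_mul, mul_add, alt1] at h
  have h2 := sub_eq_zero.mpr h
  apply sub_eq_zero.mp
  rw [← h2]; abel

lemma aux_linR (alt2 : ∀ x y : A, (x * y) * y = x * (y * y)) (x y z : A) :
    (x * y) * z + (x * z) * y = x * (y * z) + x * (z * y) := by
  have h := alt2 x (y + z)
  simp only [add_mul, mul_add, alt2] at h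
  have h2 := sub_eq_zero.mpr h
  apply sub_eq_zero.mp
  rw [← h2]; abel

lemma aux_flex (alt1 : ∀ x y : A, (x * x) * y = x * (x * y))
    (alt2 : ∀ x y : A, (x * y) * y = x * (y * y)) (x y : A) :
    (x * y) * x = x * (y * x) := by
  have h := aux_linL alt1 x y x
  rw [alt2 y x] at h
  exact add_right_cancel h

lemma aux_left (alt1 : ∀ x y : A, (x * x) * y = x * (x * y))
    (alt2 : ∀ x y : A, (x * y) * y = x * (y * y)) (x y z : A) :
    ((x * y) * x) * z = x * (y * (x * z)) := by
  have h1 := aux_linL alt1 x (x * y) z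
  have h2 := aux_linR alt2 x y (x * z)
  have h3 := aux_linR alt2 (x * x) y z
  have h4 := congrArg (fun t => x * t) (aux_linR alt2 x y z)
  simp only [mul_add, alt1] at h1 h2 h3 h4
  grind

lemma aux_right (alt1 : ∀ x y : A, (x * x) * y = x * (x * y))
    (alt2 : ∀ x y : A, (x * y) * y = x * (y * y)) (x y z : A) :
    ((z * x) * y) * x = z * ((x * y) * x) := by
  have h1 := aux_linR alt2 z (y * x) x
  have h2 := aux_linL alt1 (z * x) y x
  have h3 := aux_linL alt1 z y (x * x)
  have h4 := congrArg (fun t => t * x) (aux_linL alt1 z y x)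
  simp only [add_mul, ← alt2] at h1 h2 h3 h4
  have h5 := aux_flex alt1 alt2 x y
  rw [h5]
  grind

lemma aux_mid (alt1 : ∀ x y : A, (x * x) * y = x * (x * y))
    (alt2 : ∀ x y : A, (x * y) * y = x * (y * y)) (x y z : A) :
    (x * y) * (z * x) = x * ((y * z) * x) := by
  have h1 := aux_linR alt2 x y (z * x)
  have h2 := aux_left alt1 alt2 x z y
  rw [aux_flex alt1 alt2 x z] at h2
  have h3 := congrArg (fun t => x * t) (aux_linL alt1 y z x)
  have h4 := congrArg (fun t => x * t) (aux_linR alt2 z x y)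
  simp only [mul_add] at h1 h3 h4
  grind

lemma aux_invL (alt1 : ∀ x y : A, (x * x) * y = x * (x * y))
    (alt2 : ∀ x y : A, (x * y) * y = x * (y * y)) (a a' : A)
    (h : a * a' = 1) (h' : a' * a = 1) (z : A) : a' * (a * z) = z := by
  have key : ∀ w : A, a * (a' * (a' * (a * w))) = w := by
    intro w
    rw [← alt1 a', ← aux_left alt1 alt2, ← alt2, h, one_mul, h', one_mul]
  have k2 : a * (a' * (a * z)) = a * z := by
    rw [← aux_left alt1 alt2, h, one_mul]
  have := key (a' * (a * z))
  rw [k2, key] at this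
  exact this.symm

lemma aux_invR (alt1 : ∀ x y : A, (x * x) * y = x * (x * y))
    (alt2 : ∀ x y : A, (x * y) * y = x * (y * y)) (a a' : A)
    (h : a * a' = 1) (h' : a' * a = 1) (z : A) : (z * a) * a' = z := by
  have key : ∀ w : A, (((w * a) * a') * a') * a = w := by
    intro w
    rw [alt2 (w * a) a', aux_right alt1 alt2, ← alt2, h, one_mul, h', mul_one]
  have k2 : ((z * a) * a') * a = z * a := by
    rw [aux_right alt1 alt2, h, one_mul]
  have := key ((z * a) * a')
  rw [k2, key] at this
  exact this.symm

lemma aux_prod (alt1 : ∀ x y : A, (x * x) * y = x * (x * y))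
    (alt2 : ∀ x y : A, (x * y) * y = x * (y * y)) (a b a' b' : A)
    (ha : a * a' = 1) (ha' : a' * a = 1) (hb : b * b' = 1) (hb' : b' * b = 1) :
    (a * b) * (b' * a') = 1 := by
  have h := aux_mid alt1 alt2 a b ((b' * a') * a')
  rw [aux_invR alt1 alt2 a' a ha' ha, alt2, aux_invL alt1 alt2 b' b hb' hb,
    ← aux_flex alt1 alt2, ← alt2, ha, one_mul, ha'] at h
  exact h

end Aux

/-- In a unital alternative ring, the product of two invertible elements `a, b`
(with inverses `a'`, `b'`) is invertible with inverse `b' * a'`. -/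
theorem product_of_invertible_is_invertible {A : Type*} [NonAssocRing A]
    (alt1 : ∀ x y : A, (x * x) * y = x * (x * y))
    (alt2 : ∀ x y : A, (x * y) * y = x * (y * y))
    (a b a' b' : A)
    (ha : a * a' = 1 ∧ a' * a = 1) (hb : b * b' = 1 ∧ b' * b = 1) :
    IsInv (a * b) ∧ (b' * a') * (a * b) = 1 ∧ (a * b) * (b' * a') = 1 := by
  have h1 := aux_prod alt1 alt2 a b a' b' ha.1 ha.2 hb.1 hb.2
  have h2 := aux_prod alt1 alt2 b' a' b a hb.2 hb.1 ha.2 ha.1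
  exact ⟨⟨b' * a', h1, h2⟩, h2, h1⟩
end

section
/- Let A be a unital alternative ring admitting a derivation with invertible values d. If x ∈ A satisfies d(x) = 0, then either x = 0 or x is invertible. -/
namespace AltAux

variable {A : Type*} [NonAssocRing A]

theorem lin1 (alt1 : ∀ x y : A, (x * x) * y = x * (x * y)) (x y z : A) :
    (x * y) * z - x * (y * z) = -((y * x) * z - y * (x * z)) := by
  have h := alt1 (x + y) z
  simp only [add_mul, mul_add, alt1] at h
  rw [← sub_eq_zero] at h ⊢
  rw [← h]; abel

theorem lin2 (alt2 : ∀ x y : A, (x * y) * y = x * (y * y)) (x y z : A) :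
    (x * y) * z - x * (y * z) = -((x * z) * y - x * (z * y)) := by
  have h := alt2 x (y + z)
  simp only [add_mul, mul_add, alt2] at h
  rw [← sub_eq_zero] at h ⊢
  rw [← h]; abel

theorem cyc (alt1 : ∀ x y : A, (x * x) * y = x * (x * y))
    (alt2 : ∀ x y : A, (x * y) * y = x * (y * y)) (x y z : A) :
    (x * y) * z - x * (y * z) = (y * z) * x - y * (z * x) := by
  rw [lin1 alt1 x y z, lin2 alt2 y x z, neg_neg]

theorem flex (alt1 : ∀ x y : A, (x * x) * y = x * (x * y))
    (alt2 : ∀ x y : A, (x * y) * y = x * (y * y)) (x y : A) :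
    (x * y) * x = x * (y * x) := by
  have h := lin2 alt2 x y x
  rw [alt1, sub_self, neg_zero, sub_eq_zero] at h
  exact h

theorem lmouf (alt1 : ∀ x y : A, (x * x) * y = x * (x * y))
    (alt2 : ∀ x y : A, (x * y) * y = x * (y * y)) (x y z : A) :
    ((x * y) * x) * z = x * (y * (x * z)) := by
  have h1 := lin1 alt1 (x * y) x z
  have h2 := lin2 alt2 x y (x * z)
  have h3 := lin2 alt2 (x * x) y z
  have h4 := congrArg (x * ·) (lin2 alt2 x y z)
  simp only [← alt1 x y, ← alt1 x z] at h1 h2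
  simp only [mul_sub, mul_neg, ← alt1 x (y * z), ← alt1 x (z * y)] at h4
  rw [← sub_eq_zero] at h1 h2 h3 h4 ⊢
  have e := congrArg₂ (· + ·) (congrArg₂ (· + ·) h1 h2)
    (congrArg₂ (· - ·) h4 h3)
  simp only [add_zero, sub_zero] at e
  rw [← e]; abel

theorem rmouf (alt1 : ∀ x y : A, (x * x) * y = x * (x * y))
    (alt2 : ∀ x y : A, (x * y) * y = x * (y * y)) (x y z : A) :
    ((z * x) * y) * x = z * (x * (y * x)) := by
  have h := lmouf (A := Aᵐᵒᵖ)
    (fun a b => MulOpposite.unop_injective (alt2 b.unop a.unop).symm)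
    (fun a b => MulOpposite.unop_injective (alt1 b.unop a.unop).symm)
    (.op x) (.op y) (.op z)
  exact (congrArg MulOpposite.unop h).symm

theorem mmouf (alt1 : ∀ x y : A, (x * x) * y = x * (x * y))
    (alt2 : ∀ x y : A, (x * y) * y = x * (y * y)) (x y z : A) :
    (x * y) * (z * x) = (x * (y * z)) * x := by
  have h1 := lin2 alt2 x y (z * x)
  rw [← flex alt1 alt2 x z, lmouf alt1 alt2] at h1
  have h2 := congrArg (x * ·) (cyc alt1 alt2 y z x)
  simp only [mul_sub] at h2
  rw [flex alt1 alt2 x (y * z)]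
  rw [← sub_eq_zero] at h1 h2 ⊢
  have e := congrArg₂ (· - ·) h1 h2
  simp only [sub_zero] at e
  rw [← e]; abel

theorem linv (alt1 : ∀ x y : A, (x * x) * y = x * (x * y))
    (alt2 : ∀ x y : A, (x * y) * y = x * (y * y)) (u v : A)
    (h1 : u * v = 1) (h2 : v * u = 1) (z : A) : v * (u * z) = z := by
  have key : ∀ p : A, u * ((v * v) * (u * p)) = p := by
    intro p
    rw [← lmouf alt1 alt2, ← alt2, h1, one_mul, h2, one_mul]
  have h3 := lmouf alt1 alt2 u v z
  rw [h1, one_mul] at h3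
  rw [← key (v * (u * z)), ← h3, key]

theorem rinv (alt1 : ∀ x y : A, (x * x) * y = x * (x * y))
    (alt2 : ∀ x y : A, (x * y) * y = x * (y * y)) (u v : A)
    (h1 : u * v = 1) (h2 : v * u = 1) (z : A) : (z * u) * v = z := by
  have h := linv (A := Aᵐᵒᵖ)
    (fun a b => MulOpposite.unop_injective (alt2 b.unop a.unop).symm)
    (fun a b => MulOpposite.unop_injective (alt1 b.unop a.unop).symm)
    (.op u) (.op v) (congrArg MulOpposite.op h2) (congrArg MulOpposite.op h1) (.op z)
  exact congrArg MulOpposite.unop h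

end AltAux

/-- If `A` is a unital alternative ring admitting a derivation with invertible values `d`,
and `d x = 0`, then `x = 0` or `x` is invertible. -/
theorem kernel_element_zero_or_invertible {A : Type*} [NonAssocRing A]
    (alt1 : ∀ x y : A, (x * x) * y = x * (x * y))
    (alt2 : ∀ x y : A, (x * y) * y = x * (y * y))
    (d : A → A)
    (hadd : ∀ x y : A, d (x + y) = d x + d y)
    (hmul : ∀ x y : A, d (x * y) = d x * y + x * d y)
    (hnz : ∃ x : A, d x ≠ 0)
    (hval : ∀ x : A, d x = 0 ∨ IsInv (d x))
    (x : A) (hx : d x = 0) :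
    x = 0 ∨ IsInv x := by
  obtain ⟨y, hy⟩ := hnz
  obtain ⟨v, huv, hvu⟩ := (hval y).resolve_left hy
  have hxy : d (x * y) = x * d y := by rw [hmul, hx, zero_mul, zero_add]
  have hxv := AltAux.rinv alt1 alt2 _ _ huv hvu x
  rcases hval (x * y) with h | ⟨w', h1, h2⟩
  · left
    rw [← hxv, ← hxy, h, zero_mul]
  · right
    rw [← hxy] at hxv
    generalize d (x * y) = w at *
    generalize d y = u at *
    refine ⟨u * w', ?_, ?_⟩
    · have e : u * w' = (u * (w' * w')) * w := by
        rw [← alt2, AltAux.rinv alt1 alt2 w' w h2 h1]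
      rw [e, ← hxv, AltAux.mmouf alt1 alt2, AltAux.linv alt1 alt2 u v huv hvu,
        ← alt2, h1, one_mul, h2]
    · have e : w * v = (w * (v * v)) * u := by
        rw [← alt2, AltAux.rinv alt1 alt2 v u hvu huv]
      rw [← hxv, e, AltAux.mmouf alt1 alt2, AltAux.linv alt1 alt2 w w' h1 h2,
        ← alt2, huv, one_mul, hvu]
end

section
/- Let A be a unital alternative ring admitting a derivation with invertible values d, and let I be a nonzero proper left ideal of A (I ≠ 0 and I ≠ A). Then I ∩ d(I) = 0 and I + d(I) = A, i.e., A decomposes as the direct sum of additive subgroups I ⊕ d(I). -/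
theorem alt_cancel {A : Type*} [NonAssocRing A]
    (alt1 : ∀ x y : A, (x * x) * y = x * (x * y))
    (alt2 : ∀ x y : A, (x * y) * y = x * (y * y))
    (u b x : A) (hub : u * b = 1) (hbu : b * u = 1) (hux : u * x = 0) : x = 0 := by
  have d1 : ∀ p q r : A, associator p q r = - associator q p r := by
    intro p q r
    have h1 := alt1 (p + q) r
    have h2 := alt1 p r
    have h3 := alt1 q r
    simp only [add_mul, mul_add, h2, h3] at h1
    simp only [associator_apply]
    rw [← sub_eq_zero] at h1 ⊢
    rw [← h1]
    abel
  have d2 : ∀ p q r : A, associator p q r = - associator p r q := by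
    intro p q r
    have h1 := alt2 p (q + r)
    have h2 := alt2 p q
    have h3 := alt2 p r
    simp only [add_mul, mul_add, h2, h3] at h1
    simp only [associator_apply]
    rw [← sub_eq_zero] at h1 ⊢
    rw [← h1]
    abel
  have cyc : ∀ p q r : A, associator p q r = associator q r p := by
    intro p q r
    rw [d1 p q r, d2 q p r, neg_neg]
  have z1 : ∀ p q : A, associator p p q = 0 := by
    intro p q
    rw [associator_apply, alt1, sub_self]
  have z2 : ∀ p q : A, associator q p p = 0 := by
    intro p q
    rw [associator_apply, alt2, sub_self]
  have T : ∀ p q r s : A, associator (p * q) r s - associator p (q * r) s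
      + associator p q (r * s) = p * associator q r s + associator p q r * s := by
    intro p q r s
    simp only [associator_apply, mul_sub, sub_mul]
    abel
  have key : ∀ a c z : A, associator a (a * c) z = associator a c z * a := by
    intro a c z
    have t2 := T c z a a
    have t3 := T z a a c
    simp only [z1, z2, mul_zero, zero_mul, zero_add, zero_sub] at t2 t3
    rw [cyc z (a * a) c, cyc (a * a) c z, cyc (z * a) a c] at t3
    rw [cyc c (z * a) a, cyc (z * a) a c, ← cyc a c z] at t2
    rw [cyc a (a * c) z, cyc (a * c) z a, ← t2, ← sub_eq_zero, ← t3]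
    abel
  have k := key b u x
  have e1 : associator b u x = x := by
    rw [associator_apply, hbu, hux]; simp
  have e2 : associator b 1 x = 0 := by
    rw [associator_apply]; simp
  rw [hbu, e1, e2] at k
  rw [← e1, cyc b u x, associator_apply, hux, ← k]
  simp

/-- If `A` is a unital alternative ring admitting a derivation with invertible values `d`,
and `I` is a nonzero proper left ideal, then `I ∩ d(I) = 0` and `I + d(I) = A`,
i.e. `A = I ⊕ d(I)` as additive groups. -/
theorem ideal_direct_sum_decomposition {A : Type*} [NonAssocRing A]
    (alt1 : ∀ x y : A, (x * x) * y = x * (x * y))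
    (alt2 : ∀ x y : A, (x * y) * y = x * (y * y))
    (d : A → A)
    (hadd : ∀ x y : A, d (x + y) = d x + d y)
    (hmul : ∀ x y : A, d (x * y) = d x * y + x * d y)
    (hnz : ∃ x : A, d x ≠ 0)
    (hval : ∀ x : A, d x = 0 ∨ IsInv (d x))
    (I : AddSubgroup A)
    (hI : ∀ a x : A, x ∈ I → a * x ∈ I)
    (hIne : I ≠ ⊥)
    (hIproper : (I : Set A) ≠ Set.univ) :
    (∀ z : A, z ∈ (I : Set A) ∩ (d '' (I : Set A)) → z = 0) ∧
      (∀ a : A, ∃ x ∈ I, ∃ y ∈ I, a = x + d y) := by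
  have hno : ∀ u ∈ I, ¬ IsInv u := by
    rintro u hu ⟨b, -, hb⟩
    apply hIproper
    ext a
    simp only [SetLike.mem_coe, Set.mem_univ, iff_true]
    have h1 := hI b u hu
    rw [hb] at h1
    simpa using hI a 1 h1
  have hint : ∀ z : A, z ∈ I → ∀ y : A, d y = z → z = 0 := by
    intro z hz y hy
    rcases hval y with h | h
    · rw [← hy, h]
    · rw [hy] at h
      exact absurd h (hno z hz)
  refine ⟨?_, ?_⟩
  · rintro z ⟨hz, y, -, hy⟩
    exact hint z hz y hy
  · obtain ⟨x, hxI, hx0⟩ := (show ∃ x : A, x ∈ I ∧ x ≠ 0 by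
      by_contra! hc
      exact hIne ((AddSubgroup.eq_bot_iff_forall I).2 hc))
    have hdx : d x ≠ 0 := by
      intro h
      obtain ⟨a, ha⟩ := hnz
      obtain ⟨b, h1, h2⟩ := (hval a).resolve_left ha
      have h3 := hmul a x
      rw [h, mul_zero, add_zero] at h3
      exact hx0 (alt_cancel alt1 alt2 (d a) b x h1 h2
        (hint _ (hI (d a) x hxI) (a * x) h3))
    obtain ⟨b, -, hb⟩ := (hval x).resolve_left hdx
    have step : ∀ a p q : A, p ∈ I → q ∈ I → ∃ p' ∈ I, ∃ q' ∈ I, a * (p + d q) = p' + d q' := by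
      intro a p q hp hq
      refine ⟨a * p - d a * q, I.sub_mem (hI a p hp) (hI _ q hq), a * q, hI a q hq, ?_⟩
      rw [hmul, mul_add]
      abel
    intro a
    obtain ⟨p, hp, q, hq, h⟩ := step b 0 x I.zero_mem hxI
    rw [zero_add, hb] at h
    obtain ⟨p', hp', q', hq', h'⟩ := step a p q hp hq
    rw [← h, mul_one] at h'
    exact ⟨p', hp', q', hq', h'⟩
end

section
/- Let A be a unital alternative ring admitting a derivation with invertible values d. If I is a proper two-sided ideal of A (I ≠ A), then I*I = 0, i.e., a*b = 0 for all a, b ∈ I. -/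
theorem alt_left_moufang {A : Type*} [NonAssocRing A]
    (alt1 : ∀ x y : A, (x * x) * y = x * (x * y))
    (alt2 : ∀ x y : A, (x * y) * y = x * (y * y)) (x a y : A) :
    ((x * a) * x) * y = x * (a * (x * y)) := by
  have L : ∀ x y z : A, (x * y) * z + (y * x) * z = x * (y * z) + y * (x * z) := by
    intro x y z
    have h := alt1 (x + y) z
    simp only [add_mul, mul_add, alt1] at h
    have h2 : (x * y) * z + (y * x) * z - (x * (y * z) + y * (x * z)) = 0 := by
      rw [← sub_eq_zero] at h
      rw [← h]; abel
    exact sub_eq_zero.mp h2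
  have R : ∀ x y z : A, (x * y) * z + (x * z) * y = x * (y * z) + x * (z * y) := by
    intro x y z
    have h := alt2 x (y + z)
    simp only [add_mul, mul_add, alt2] at h
    have h2 : (x * y) * z + (x * z) * y - (x * (y * z) + x * (z * y)) = 0 := by
      rw [← sub_eq_zero] at h
      rw [← h]; abel
    exact sub_eq_zero.mp h2
  have h1 := L (x * a) x y
  have h2 := R x a (x * y)
  have h3 := R (x * x) a y
  have h4 := congrArg (fun t => x * t) (R x a y)
  simp only [mul_add, alt1] at h3 h4
  rw [← sub_eq_zero] at h1 h2 h3 h4 ⊢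
  have e : ((x * a) * x) * y - x * (a * (x * y)) =
    (((x * a) * x) * y + (x * (x * a)) * y - ((x * a) * (x * y) + x * ((x * a) * y)))
    + ((x * a) * (x * y) + (x * (x * y)) * a - (x * (a * (x * y)) + x * ((x * y) * a)))
    - ((x * (x * a)) * y + (x * (x * y)) * a - (x * (x * (a * y)) + x * (x * (y * a))))
    + (x * ((x * a) * y) + x * ((x * y) * a) - (x * (x * (a * y)) + x * (x * (y * a)))) := by
    abel
  rw [e, h1, h2, h3, h4]; simp

/-- If `A` is a unital alternative ring admitting a derivation with invertible values `d`,
then every proper two-sided ideal `I` of `A` satisfies `I * I = 0`. -/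
theorem proper_ideal_square_zero {A : Type*} [NonAssocRing A]
    (alt1 : ∀ x y : A, (x * x) * y = x * (x * y))
    (alt2 : ∀ x y : A, (x * y) * y = x * (y * y))
    (d : A → A)
    (hadd : ∀ x y : A, d (x + y) = d x + d y)
    (hmul : ∀ x y : A, d (x * y) = d x * y + x * d y)
    (hnz : ∃ x : A, d x ≠ 0)
    (hval : ∀ x : A, d x = 0 ∨ IsInv (d x))
    (I : AddSubgroup A)
    (hIl : ∀ a x : A, x ∈ I → a * x ∈ I)
    (hIr : ∀ a x : A, x ∈ I → x * a ∈ I)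
    (hIproper : (I : Set A) ≠ Set.univ) :
    ∀ a ∈ I, ∀ b ∈ I, a * b = 0 := by
  have hno : ∀ x ∈ I, ¬ IsInv x := by
    rintro x hx ⟨b, hb, -⟩
    apply hIproper
    ext y
    simp only [SetLike.mem_coe, Set.mem_univ, iff_true]
    have h := hIl y _ (hIr b x hx)
    rwa [hb, mul_one] at h
  have key : ∀ x ∈ I, d x = 0 → x = 0 := by
    intro x hx h0
    obtain ⟨c, hc⟩ := hnz
    obtain ⟨v, huv, hvu⟩ := (hval c).resolve_left hc
    have h1 : d (c * x) = d c * x := by rw [hmul, h0, mul_zero, add_zero]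
    have h2 : d c * x = 0 := by
      rcases hval (c * x) with h | h
      · rw [← h1, h]
      · rw [h1] at h
        exact absurd h (hno _ (hIl _ _ hx))
    have h3 := alt_left_moufang alt1 alt2 (d c) (v * v) x
    rw [← alt2, huv, one_mul, hvu, one_mul, h2, mul_zero, mul_zero] at h3
    exact h3
  intro a ha b hb
  apply key _ (hIl _ _ hb)
  rcases hval (a * b) with h | h
  · exact h
  · refine absurd h (hno _ ?_)
    rw [hmul]
    exact I.add_mem (hIl _ _ hb) (hIr _ _ ha)
end

section
/- Let A be a unital alternative ring admitting a derivation with invertible values d, and suppose 1 + 1 ≠ 0 in A. Then A is simple: the only two-sided ideals of A are 0 and A. -/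
theorem left_inv_cancel {A : Type*} [NonAssocRing A]
    (alt1 : ∀ x y : A, (x * x) * y = x * (x * y))
    (alt2 : ∀ x y : A, (x * y) * y = x * (y * y))
    (a b : A) (hab : a * b = 1) (hba : b * a = 1) (x : A) : b * (a * x) = x := by
  obtain ⟨S, hS⟩ : ∃ S : A → A → A → A, ∀ x y z, S x y z = (x * y) * z - x * (y * z) :=
    ⟨_, fun _ _ _ => rfl⟩
  have T : ∀ w x y z, S (w * x) y z - S w (x * y) z + S w x (y * z)
      = w * S x y z + S w x y * z := by
    intro w x y z
    simp only [hS, mul_sub, sub_mul]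
    abel
  have L0 : ∀ x y, S x x y = 0 := fun x y => by rw [hS, alt1, sub_self]
  have R0 : ∀ x y, S x y y = 0 := fun x y => by rw [hS, alt2, sub_self]
  have s12 : ∀ x y z, S x y z = - S y x z := by
    intro x y z
    have h := L0 (x + y) z
    have h1 := L0 x z
    have h2 := L0 y z
    simp only [hS, add_mul, mul_add] at h h1 h2 ⊢
    grind
  have s23 : ∀ x y z, S x y z = - S x z y := by
    intro x y z
    have h := R0 x (y + z)
    have h1 := R0 x y
    have h2 := R0 x z
    simp only [hS, add_mul, mul_add] at h h1 h2 ⊢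
    grind
  have F0 : ∀ x y, S x y x = 0 := fun x y => by rw [s23, L0, neg_zero]
  have o1 : ∀ x y, S 1 x y = 0 := fun x y => by simp [hS]
  have o2 : ∀ x y, S x 1 y = 0 := fun x y => by simp [hS]
  have o3 : ∀ x y, S x y 1 = 0 := fun x y => by simp [hS]
  have q0 : ∀ x, S (b * b) a x = 0 := by
    intro x
    have e1 : S (b * b) a x = b * S b a x := by
      have := T b b a x
      simpa [hba, o2, L0] using this
    have e2 : S b a (b * x) = b * S a b x := by
      have := T b a b x
      simpa [hba, hab, o1, o2, F0] using this
    have e3 : S (x * b) b a = S x (b * b) a := by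
      have := T x b b a
      simpa [hba, o3, L0, R0, sub_eq_zero] using this
    have e4 := T b x b a
    simp only [hba, o3, F0, zero_mul, add_zero] at e4
    have e5 : b * S a b x = - (b * S b a x) := by rw [s12 a b x, mul_neg]
    have e6 : S x b a = S b a x := by rw [s12 x b a, s23 b x a, neg_neg]
    have e7 : S x (b * b) a = S (b * b) a x := by
      rw [s12 x (b * b) a, s23 (b * b) x a, neg_neg]
    have e8 : S (b * x) b a = S b a (b * x) := by
      rw [s12 (b * x) b a, s23 b (b * x) a, neg_neg]
    have e9 : S b (x * b) a = - S (x * b) b a := s12 _ _ _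
    rw [e6] at e4
    grind
  have hbb : a * (b * b) = b := by rw [← alt2, hab, one_mul]
  have key := T a x a (b * b)
  have k1 : S (a * x) a (b * b) = 0 := by
    rw [s12, s23, s12, q0]; simp
  have k2 : S a (x * a) (b * b) = 0 := by
    rw [s23, s12, q0]; simp
  have k3 : S x a (b * b) = 0 := by
    rw [s12, s23, s12, q0]; simp
  rw [hbb, k1, k2, k3, F0] at key
  have k4 : S a x b = 0 := by simpa using key
  have k5 : S b a x = 0 := by rw [s12, s23, k4]; simp
  rw [hS, hba, one_mul, sub_eq_zero] at k5
  exact k5.symm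

/-- If `A` is a unital alternative ring with `1 + 1 ≠ 0` admitting a derivation with
invertible values `d`, then `A` is simple: the only two-sided ideals are `0` and `A`. -/
theorem char_ne_two_implies_simple {A : Type*} [NonAssocRing A]
    (alt1 : ∀ x y : A, (x * x) * y = x * (x * y))
    (alt2 : ∀ x y : A, (x * y) * y = x * (y * y))
    (d : A → A)
    (hadd : ∀ x y : A, d (x + y) = d x + d y)
    (hmul : ∀ x y : A, d (x * y) = d x * y + x * d y)
    (hnz : ∃ x : A, d x ≠ 0)
    (hval : ∀ x : A, d x = 0 ∨ IsInv (d x))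
    (h2 : (1 : A) + 1 ≠ 0) :
    ∀ I : AddSubgroup A,
      (∀ a x : A, x ∈ I → a * x ∈ I) →
      (∀ a x : A, x ∈ I → x * a ∈ I) →
      I = ⊥ ∨ (I : Set A) = Set.univ := by
  intro I hl hr
  by_contra hcon
  rw [not_or] at hcon
  obtain ⟨hbot, htop⟩ := hcon
  have hone : (1 : A) ∉ I := by
    intro h
    apply htop
    ext a
    simp only [SetLike.mem_coe, Set.mem_univ, iff_true]
    simpa using hl a 1 h
  have hd0 : ∀ x, d x ∈ I → d x = 0 := by
    intro x hx
    rcases hval x with h | ⟨b, _, h⟩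
    · exact h
    · exact absurd (h ▸ hl b _ hx) hone
  have canc : ∀ a x y : A, d a ≠ 0 → d a * x ∈ I → x ∈ I ∧ (d a * x = 0 → x = 0) := by
    intro a x _ ha hx
    rcases hval a with h | ⟨b, h, h'⟩
    · exact absurd h ha
    · have e := left_inv_cancel alt1 alt2 _ b h h' x
      refine ⟨e ▸ hl b _ hx, fun h0 => ?_⟩
      rw [← e, h0, mul_zero]
  obtain ⟨a, ha⟩ := hnz
  have d0 : d 0 = 0 := by simpa using hadd 0 0
  have d1 : d 1 = 0 := by simpa using hmul 1 1
  have inj : ∀ x ∈ I, d x = 0 → x = 0 := by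
    intro x hx h
    have e : d (a * x) = d a * x := by rw [hmul, h, mul_zero, add_zero]
    have m : d a * x ∈ I := hl _ _ hx
    exact (canc a x 0 ha m).2 (e ▸ hd0 (a * x) (e ▸ m))
  obtain ⟨x, hx, hx0⟩ : ∃ x ∈ I, x ≠ 0 := by
    by_contra hh
    push Not at hh
    exact hbot ((AddSubgroup.eq_bot_iff_forall I).2 hh)
  have hdx : d x ≠ 0 := fun h => hx0 (inj x hx h)
  have hxx : x * x = 0 := by
    apply inj _ (hl _ _ hx)
    apply hd0
    rw [hmul]
    exact I.add_mem (hl _ _ hx) (hr _ _ hx)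
  have hdd : d (d (x * x)) = 0 := by rw [hxx, d0, d0]
  rw [hmul, hadd, hmul, hmul] at hdd
  have m2 : d x * (d x + d x) ∈ I := by
    have : d x * (d x + d x) = -(d (d x) * x + x * d (d x)) := by
      rw [mul_add]
      rw [← sub_eq_zero, ← hdd]
      abel
    rw [this]
    exact I.neg_mem (I.add_mem (hl _ _ hx) (hr _ _ hx))
  have m3 := (canc x _ 0 hdx m2).1
  rcases hval x with h | ⟨b, h, _⟩
  · exact hdx h
  · have m4 := hr b _ m3
    rw [add_mul, h] at m4
    exact h2 (inj _ m4 (by rw [hadd, d1, add_zero]))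
end

section
/- Let A be a unital alternative ring admitting a derivation with invertible values d. Then A is d-simple: every two-sided ideal I of A that is invariant under d (i.e., d(I) ⊆ I) equals 0 or A. -/
/-- If `A` is a unital alternative ring admitting a derivation with invertible values `d`,
then `A` is `d`-simple: every `d`-invariant two-sided ideal is `0` or `A`. -/
theorem d_simple_of_derivation_with_invertible_values {A : Type*} [NonAssocRing A]
    (alt1 : ∀ x y : A, (x * x) * y = x * (x * y))
    (alt2 : ∀ x y : A, (x * y) * y = x * (y * y))
    (d : A → A)
    (hadd : ∀ x y : A, d (x + y) = d x + d y)
    (hmul : ∀ x y : A, d (x * y) = d x * y + x * d y)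
    (hnz : ∃ x : A, d x ≠ 0)
    (hval : ∀ x : A, d x = 0 ∨ IsInv (d x))
    (I : AddSubgroup A)
    (hIl : ∀ a x : A, x ∈ I → a * x ∈ I)
    (hIr : ∀ a x : A, x ∈ I → x * a ∈ I)
    (hId : ∀ x : A, x ∈ I → d x ∈ I) :
    I = ⊥ ∨ (I : Set A) = Set.univ := by
  by_cases h : ∃ x ∈ I, d x ≠ 0
  · right
    obtain ⟨x, hx, hne⟩ := h
    obtain ⟨b, hb, -⟩ := (hval x).resolve_left hne
    have h1 : (1 : A) ∈ I := hb ▸ hIr b _ (hId x hx)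
    ext y
    simpa using hIl y 1 h1
  · left
    push Not at h
    obtain ⟨a, ha⟩ := hnz
    obtain ⟨b, hb, -⟩ := (hval a).resolve_left ha
    have key : ∀ x ∈ I, d a * x = 0 := by
      intro x hx
      have := hmul a x
      rw [h _ (hIl a x hx), h x hx, mul_zero, add_zero] at this
      exact this.symm
    rw [AddSubgroup.eq_bot_iff_forall]
    intro x hx
    have e := alt2 (d a) (b + x)
    have e1 := alt2 (d a) b
    have k1 := key _ hx
    have k2 := key _ (hIl b x hx)
    have k3 := key _ (hIr b x hx)
    have k4 := key _ (hIl x x hx)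
    simp only [mul_add, add_mul, hb, k1, k2, k3, k4, zero_mul, add_zero, one_mul] at e e1
    rw [← e1] at e
    simpa using e
end

section
/- Let A be a finite-dimensional alternative algebra over a field of characteristic zero. Then A is nilpotent if and only if A admits an invertible (bijective) Leibniz-derivation of some order n ≥ 2. -/
/-- The left-normed product `((x₁x₂)x₃)⋯xₙ` of a list of elements
(`0` for the empty list, which we never use). -/
def lnProd {A : Type*} [Mul A] [Zero A] : List A → A
  | [] => 0
  | a :: l => l.foldl (· * ·) a

/-- A Leibniz-derivation of order `n`: a linear endomorphism `φ` with
`φ(x₁⋯xₙ) = Σᵢ x₁⋯φ(xᵢ)⋯xₙ` (left-normed products). -/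
def IsLeibnizDer {F A : Type*} [Field F] [NonUnitalNonAssocRing A] [Module F A]
    (n : ℕ) (φ : A →ₗ[F] A) : Prop :=
  ∀ x : Fin n → A,
    φ (lnProd (List.ofFn x)) =
      ∑ i : Fin n, lnProd (List.ofFn (Function.update x i (φ (x i))))

/-- `IsProd n a` : `a` is a product of `n` elements of `A` under some
distribution of parentheses. -/
inductive IsProd {A : Type*} [Mul A] : ℕ → A → Prop
  | single (a : A) : IsProd 1 a
  | mul {m n : ℕ} {x y : A} : IsProd m x → IsProd n y → IsProd (m + n) (x * y)


/-- strictly triangularizable sets of endomorphisms -/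
def LDNil {F V : Type*} [Field F] [AddCommGroup V] [Module F V] (C : Set (V →ₗ[F] V)) : Prop :=
  ∃ M : ℕ → Submodule F V, Monotone M ∧ M 0 = ⊥ ∧ (∃ N, M N = ⊤) ∧
    ∀ i, ∀ f ∈ C, ∀ v ∈ M (i+1), f v ∈ M i

theorem LDNil.rel {F V : Type*} [Field F] [AddCommGroup V] [Module F V] {C : Set (V →ₗ[F] V)}
    (h : LDNil C) (X U : Submodule F V) (hX : ∀ f ∈ C, ∀ v ∈ X, f v ∈ X) (hXU : ¬ X ≤ U) :
    ∃ v ∈ X, v ∉ U ∧ ∀ f ∈ C, f v ∈ U := by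
  classical
  obtain ⟨M, hM, h0, ⟨N, hN⟩, hs⟩ := h
  have hex : ∃ j, ¬ (M j ⊓ X ≤ U) := ⟨N, by simpa [hN] using hXU⟩
  have hj := Nat.find_spec hex
  have hmin : ∀ m, m < Nat.find hex → M m ⊓ X ≤ U := fun m hm => not_not.1 (Nat.find_min hex hm)
  rcases hk : Nat.find hex with _ | k
  · rw [hk, h0] at hj
    simp at hj
  · rw [hk] at hj hmin
    obtain ⟨v, hv, hvU⟩ := SetLike.not_le_iff_exists.1 hj
    exact ⟨v, hv.2, hvU, fun f hf => hmin k (Nat.lt_succ_self k) ⟨hs k f hf v hv.1, hX f hf v hv.2⟩⟩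

theorem LDNil.of_step {F V : Type*} [Field F] [AddCommGroup V] [Module F V]
    [FiniteDimensional F V] (C : Set (V →ₗ[F] V))
    (h : ∀ U : Submodule F V, U ≠ ⊤ → (∀ f ∈ C, ∀ v ∈ U, f v ∈ U) →
      ∃ v, v ∉ U ∧ ∀ f ∈ C, f v ∈ U) : LDNil C := by
  let S : Submodule F V → Submodule F V := fun U => ⨅ f ∈ C, U.comap f
  have hS : ∀ U v, v ∈ S U ↔ ∀ f ∈ C, f v ∈ U := by
    intro U v; simp [S, Submodule.mem_iInf]
  let M : ℕ → Submodule F V := fun i => S^[i] ⊥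
  have hMs : ∀ i, M (i+1) = S (M i) := fun i => Function.iterate_succ_apply' S i ⊥
  have hmono : Monotone M := by
    apply monotone_nat_of_le_succ
    intro i
    induction i with
    | zero => simp [M]
    | succ i ih =>
      intro v hv
      rw [hMs, hS] at hv ⊢
      exact fun f hf => ih (hv f hf)
  have hinv : ∀ i, ∀ f ∈ C, ∀ v ∈ M i, f v ∈ M i := by
    intro i f hf v hv
    have := hmono (Nat.le_succ i) hv
    rw [Nat.succ_eq_add_one, hMs, hS] at this
    exact this f hf
  have hstab := monotone_stabilizes_iff_noetherian.2 (inferInstance : IsNoetherian F V) ⟨M, hmono⟩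
  obtain ⟨N, hN⟩ := hstab
  refine ⟨M, hmono, rfl, ⟨N, ?_⟩, ?_⟩
  · by_contra hne
    obtain ⟨v, hv, hv2⟩ := h (M N) hne (hinv N)
    apply hv
    have h1 : M N = M (N+1) := hN (N+1) (Nat.le_succ N)
    rw [h1, hMs, hS]
    exact hv2
  · intro i f hf v hv
    rw [hMs, hS] at hv
    exact hv f hf

/-- Jacobson's theorem on weakly closed sets, Jordan case. -/
theorem LDNil.jordan {F V : Type*} [Field F] [AddCommGroup V] [Module F V]
    [FiniteDimensional F V] (W : Submodule F (V →ₗ[F] V))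
    (hW : ∀ f ∈ W, ∀ g ∈ W, f * g + g * f ∈ W) (hn : ∀ f ∈ W, IsNilpotent f) :
    LDNil (W : Set (V →ₗ[F] V)) := by
  let P : Submodule F (V →ₗ[F] V) → Prop := fun C => C ≤ W ∧ LDNil (C : Set (V →ₗ[F] V)) ∧
    ∀ f ∈ C, ∀ g ∈ C, f * g + g * f ∈ C
  have hP0 : P ⊥ := by
    refine ⟨bot_le, ?_, ?_⟩
    · apply LDNil.of_step
      intro U hU _
      obtain ⟨v, hv⟩ := SetLike.exists_not_mem_of_ne_top U hU rfl
      exact ⟨v, hv, by simp⟩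
    · simp
  obtain ⟨C, hC, hmax⟩ := (wellFounded_gt (α := Submodule F (V →ₗ[F] V))).has_min {C | P C} ⟨⊥, hP0⟩
  obtain ⟨hCW, hCn, hCj⟩ := hC
  by_cases hle : W ≤ C
  · rwa [le_antisymm hle hCW]
  exfalso
  -- the operators f ↦ cf + fc
  let ad : (V →ₗ[F] V) → ((V →ₗ[F] V) →ₗ[F] (V →ₗ[F] V)) := fun c =>
    LinearMap.mulLeft F c + LinearMap.mulRight F c
  have had : LDNil (ad '' (C : Set (V →ₗ[F] V))) := by
    obtain ⟨K, hK, hK0, ⟨N, hN⟩, hs⟩ := hCn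
    let M : ℕ → Submodule F (V →ₗ[F] V) := fun j =>
      { carrier := {f | ∀ i, ∀ v ∈ K i, f v ∈ K (i + j - N)}
        add_mem' := fun {f g} hf hg i v hv => by
          simpa using (K _).add_mem (hf i v hv) (hg i v hv)
        zero_mem' := fun i v hv => by simp
        smul_mem' := fun a f hf i v hv => by
          simpa using (K _).smul_mem a (hf i v hv) }
    have hM : ∀ j f, f ∈ M j ↔ ∀ i, ∀ v ∈ K i, f v ∈ K (i + j - N) := fun j f => Iff.rfl
    refine ⟨M, ?_, ?_, ⟨2 * N, ?_⟩, ?_⟩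
    · intro a b hab f hf i v hv
      exact hK (by omega) (hf i v hv)
    · rw [eq_bot_iff]
      intro f hf
      rw [Submodule.mem_bot]
      ext v
      have := hf N v (by rw [hN]; trivial)
      simpa [hK0] using this
    · rw [eq_top_iff]
      intro f _ i v hv
      have : K (i + 2 * N - N) = ⊤ := by
        rw [eq_top_iff, ← hN]; exact hK (by omega)
      rw [this]; trivial
    · rintro j _ ⟨c, hc, rfl⟩ f hf i v hv
      have e1 : ad c f v = c (f v) + f (c v) := by simp [ad]
      rw [e1]
      apply (K _).add_mem
      · have h1 := hf i v hv
        by_cases hz : i + (j+1) - N = 0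
        · rw [hz, hK0, Submodule.mem_bot] at h1
          rw [h1]; simp
        · have h2 : i + (j+1) - N = (i + j - N) + 1 := by omega
          rw [h2] at h1
          exact hs _ c hc _ h1
      · rcases i with _ | i
        · rw [hK0, Submodule.mem_bot] at hv
          rw [hv]; simp
        · have h1 := hf i _ (hs i c hc v hv)
          have h2 : i + (j+1) - N = i + 1 + j - N := by omega
          rwa [h2] at h1
  obtain ⟨w, hwW, hwC, hw⟩ := had.rel W C (by
    rintro _ ⟨c, hc, rfl⟩ f hf
    exact hW c (hCW hc) f hf) hle
  have hw' : ∀ c ∈ C, c * w + w * c ∈ C := fun c hc => hw _ ⟨c, hc, rfl⟩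
  have hn2 : LDNil (insert w (C : Set (V →ₗ[F] V))) := by
    apply LDNil.of_step
    intro U hU hinv
    let X : Submodule F V := ⨅ f ∈ C, U.comap f
    have hX : ∀ v, v ∈ X ↔ ∀ f ∈ C, f v ∈ U := by
      intro v; simp [X, Submodule.mem_iInf]
    obtain ⟨v, -, hvU, hv⟩ := hCn.rel ⊤ U (by simp) (by rwa [top_le_iff])
    have hvX : v ∈ X := (hX v).2 hv
    have hwX : ∀ u ∈ X, w u ∈ X := by
      intro u hu
      rw [hX] at hu ⊢
      intro c hc
      have h1 := hu _ (hw' c hc)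
      have h2 : w (c u) ∈ U := hinv w (Set.mem_insert _ _) _ (hu c hc)
      have h3 := U.sub_mem h1 h2
      simpa using h3
    have hpX : ∀ m, (w ^ m) v ∈ X := by
      intro m
      induction m with
      | zero => simpa using hvX
      | succ m ih => rw [pow_succ']; exact hwX _ ih
    obtain ⟨k, hk⟩ := hn w hwW
    classical
    have hex : ∃ m, (w ^ m) v ∈ U := ⟨k, by simp [hk]⟩
    rcases hm : Nat.find hex with _ | m
    · have := Nat.find_spec hex
      rw [hm] at this
      exact absurd (by simpa using this) hvU
    · have h1 := Nat.find_spec hex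
      rw [hm, pow_succ'] at h1
      refine ⟨(w ^ m) v, Nat.find_min hex (by omega), ?_⟩
      rintro f (rfl | hf)
      · exact h1
      · exact (hX _).1 (hpX m) f hf
  obtain ⟨K, hK, hK0, hKN, hs⟩ := hn2
  let C' : Submodule F (V →ₗ[F] V) := W ⊓
      { carrier := {f | ∀ i, ∀ v ∈ K (i+1), f v ∈ K i}
        add_mem' := fun {f g} hf hg i v hv => by
          simpa using (K _).add_mem (hf i v hv) (hg i v hv)
        zero_mem' := fun i v hv => by simp
        smul_mem' := fun a f hf i v hv => by
          simpa using (K _).smul_mem a (hf i v hv) }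
  have hC' : ∀ f, f ∈ C' ↔ f ∈ W ∧ ∀ i, ∀ v ∈ K (i+1), f v ∈ K i := fun f => Iff.rfl
  have hPC' : P C' := by
    refine ⟨inf_le_left, ⟨K, hK, hK0, hKN, fun i f hf => hf.2 i⟩, ?_⟩
    intro f hf g hg
    refine (hC' _).2 ⟨hW f hf.1 g hg.1, fun i v hv => ?_⟩
    have key : ∀ f ∈ C', ∀ g ∈ C', f (g v) ∈ K i := fun f hf g hg =>
      hf.2 i _ (hK (Nat.le_succ i) (hg.2 i v hv))
    exact (K i).add_mem (key f hf g hg) (key g hg f hf)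
  apply hmax C' hPC'
  refine lt_of_le_of_ne ?_ ?_
  · intro f hf
    exact (hC' _).2 ⟨hCW hf, fun i => hs i f (Set.mem_insert_of_mem _ hf)⟩
  · intro heq
    apply hwC
    rw [heq]
    exact (hC' _).2 ⟨hwW, fun i => hs i w (Set.mem_insert _ _)⟩

theorem LD_nilpotent_of_trace {F V : Type*} [Field F] [CharZero F] [AddCommGroup V] [Module F V]
    [FiniteDimensional F V] (f : Module.End F V)
    (h : ∀ k, LinearMap.trace F V (f ^ (k+1)) = 0) : IsNilpotent f := by
  have hp : minpoly F f ≠ 0 := minpoly.ne_zero (Algebra.IsIntegral.isIntegral f)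
  obtain ⟨q, hq, hnd⟩ := Polynomial.exists_eq_pow_rootMultiplicity_mul_and_not_dvd _ hp 0
  set a := Polynomial.rootMultiplicity 0 (minpoly F f)
  rw [Polynomial.C_0, sub_zero] at hq hnd
  have hcop : IsCoprime (Polynomial.X ^ (a+1)) q :=
    IsCoprime.pow_left ((Polynomial.prime_X.irreducible.coprime_iff_not_dvd).2 hnd)
  obtain ⟨u, v, huv⟩ := hcop
  have hz : Polynomial.aeval f (Polynomial.X ^ (a+1) * q) = 0 := by
    rw [pow_succ', mul_assoc, ← hq, map_mul, minpoly.aeval, mul_zero]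
  set E := Polynomial.aeval f (u * Polynomial.X ^ (a+1)) with hE
  have hE1 : E * E = E := by
    have : u * Polynomial.X ^ (a+1) * (u * Polynomial.X ^ (a+1)) =
      u * Polynomial.X ^ (a+1) - (u * v) * (Polynomial.X ^ (a+1) * q) := by
      linear_combination (u * Polynomial.X ^ (a+1)) * huv
    rw [hE, ← map_mul, this, map_sub, map_mul _ (u*v), hz, mul_zero, sub_zero]
  have htr : ∀ p : Polynomial F, LinearMap.trace F V (Polynomial.aeval f (p * Polynomial.X)) = 0 := by
    intro p
    induction p using Polynomial.induction_on' with
    | add p q hp hq => rw [add_mul, map_add, map_add, hp, hq, add_zero]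
    | monomial n c =>
      rw [Polynomial.monomial_mul_X, Polynomial.aeval_monomial, ← Algebra.smul_def, map_smul, h n, smul_zero]
  have hE0 : E = 0 := by
    apply LinearMap.IsIdempotentElem.eq_zero_of_trace_eq_zero (R := F)
    · exact hE1
    · rw [hE, pow_succ, ← mul_assoc]; exact htr _
  refine ⟨a+1, ?_⟩
  have : (Polynomial.X : Polynomial F) ^ (a+1) = Polynomial.X ^ (a+1) * (u * Polynomial.X ^ (a+1)) + v * (Polynomial.X ^ (a+1) * q) := by
    linear_combination (-Polynomial.X ^ (a+1)) * huv
  have h2 := congrArg (Polynomial.aeval f) this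
  rw [map_add, map_mul, map_mul _ v, hz, ← hE, hE0] at h2
  simpa using h2

/-- right multiplication -/
def LDR (F A : Type*) [Field F] [NonUnitalNonAssocRing A] [Module F A] [SMulCommClass F A A]
    [IsScalarTower F A A] : A →ₗ[F] Module.End F A := (LinearMap.mul F A).flip

/-- left multiplication -/
def LDL (F A : Type*) [Field F] [NonUnitalNonAssocRing A] [Module F A] [SMulCommClass F A A]
    [IsScalarTower F A A] : A →ₗ[F] Module.End F A := LinearMap.mul F A

section alt
variable {F A : Type*} [Field F] [NonUnitalNonAssocRing A] [Module F A] [SMulCommClass F A A]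
    [IsScalarTower F A A]

@[simp] theorem LDR_apply (x y : A) : LDR F A x y = y * x := rfl
@[simp] theorem LDL_apply (x y : A) : LDL F A x y = x * y := rfl

theorem LD_llin (alt1 : ∀ x y : A, (x * x) * y = x * (x * y)) (x y z : A) :
    x * y * z + y * x * z = x * (y * z) + y * (x * z) := by
  have h := alt1 (x + y) z
  simp only [add_mul, mul_add, alt1] at h
  have h2 : x * (x * z) + y * x * z + (x * y * z + y * (y * z)) - x * (x * z) - y * (y * z) =
    x * (x * z) + y * (x * z) + (x * (y * z) + y * (y * z)) - x * (x * z) - y * (y * z) := by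
    rw [h]
    try abel
  calc _ = _ := by abel
    _ = _ := h2
    _ = _ := by abel

theorem LD_rlin (alt2 : ∀ x y : A, (x * y) * y = x * (y * y)) (x y z : A) :
    z * x * y + z * y * x = z * (x * y) + z * (y * x) := by
  have h := alt2 z (x + y)
  simp only [add_mul, mul_add, alt2] at h
  have h2 := congrArg (fun t => t - z * (x * x) - z * (y * y)) h
  calc _ = _ := by abel
    _ = _ := h2
    _ = _ := by abel

theorem LD_flex (alt1 : ∀ x y : A, (x * x) * y = x * (x * y))
    (alt2 : ∀ x y : A, (x * y) * y = x * (y * y)) (x y : A) : x * y * x = x * (y * x) := by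
  have := LD_llin alt1 x y x
  rwa [alt2 y x, add_left_inj] at this

/-- `x^(m+1)` commutes with `x`. -/
theorem LD_pow_comm (alt1 : ∀ x y : A, (x * x) * y = x * (x * y))
    (alt2 : ∀ x y : A, (x * y) * y = x * (y * y)) (x : A) (m : ℕ) :
    x * ((LDR F A x) ^ m) x = ((LDR F A x) ^ m) x * x := by
  induction m with
  | zero => simp
  | succ m ih =>
    rw [pow_succ', Module.End.mul_apply, LDR_apply, ← LD_flex alt1 alt2, ih]

theorem LD_pow_R [CharZero F] (alt1 : ∀ x y : A, (x * x) * y = x * (x * y))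
    (alt2 : ∀ x y : A, (x * y) * y = x * (y * y)) (x : A) (m : ℕ) :
    LDR F A (((LDR F A x) ^ m) x) = (LDR F A x) ^ (m+1) := by
  induction m with
  | zero => simp
  | succ m ih =>
    ext z
    have h1 := LD_rlin alt2 (((LDR F A x) ^ m) x) x z
    rw [LD_pow_comm alt1 alt2] at h1
    have h2 : ∀ u : A, u * ((LDR F A x) ^ m) x = ((LDR F A x) ^ (m+1)) u := by
      intro u; rw [← ih]; rfl
    rw [h2 z, h2 (z * x)] at h1
    have h3 : ((LDR F A x) ^ (m+1)) (z * x) = ((LDR F A x) ^ (m+1+1)) z := by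
      rw [pow_succ _ (m+1)]; rfl
    have h4 : ((LDR F A x) ^ (m+1)) z * x = ((LDR F A x) ^ (m+1+1)) z := by
      rw [pow_succ' _ (m+1)]; rfl
    have h5 : ((LDR F A x) ^ (m+1)) x = ((LDR F A x) ^ m) x * x := by
      rw [pow_succ' _ m]; rfl
    rw [h3, h4, ← two_smul F, ← two_smul F] at h1
    rw [LDR_apply, h5]
    exact (smul_right_injective A (two_ne_zero (α := F)) h1).symm

theorem LD_pow_L [CharZero F] (alt1 : ∀ x y : A, (x * x) * y = x * (x * y))
    (alt2 : ∀ x y : A, (x * y) * y = x * (y * y)) (x : A) (m : ℕ) :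
    LDL F A (((LDR F A x) ^ m) x) = (LDL F A x) ^ (m+1) := by
  induction m with
  | zero => simp
  | succ m ih =>
    ext z
    have h1 := LD_llin alt1 (((LDR F A x) ^ m) x) x z
    rw [LD_pow_comm alt1 alt2] at h1
    have h2 : ∀ u : A, ((LDR F A x) ^ m) x * u = ((LDL F A x) ^ (m+1)) u := by
      intro u; rw [← ih]; rfl
    rw [h2 z, h2 (x * z)] at h1
    have h3 : ((LDL F A x) ^ (m+1)) (x * z) = ((LDL F A x) ^ (m+1+1)) z := by
      rw [pow_succ _ (m+1)]; rfl
    have h4 : x * ((LDL F A x) ^ (m+1)) z = ((LDL F A x) ^ (m+1+1)) z := by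
      rw [pow_succ' _ (m+1)]; rfl
    have h5 : ((LDR F A x) ^ (m+1)) x = ((LDR F A x) ^ m) x * x := by
      rw [pow_succ' _ m]; rfl
    rw [h3, h4, ← two_smul F, ← two_smul F] at h1
    rw [LDL_apply, h5]
    exact (smul_right_injective A (two_ne_zero (α := F)) h1)

/-- trace functional -/
noncomputable def LDT (F A : Type*) [Field F] [NonUnitalNonAssocRing A] [Module F A]
    [SMulCommClass F A A] [IsScalarTower F A A] : A →ₗ[F] F := LinearMap.trace F A ∘ₗ LDR F A

theorem LDT_mul (alt1 : ∀ x y : A, (x * x) * y = x * (x * y)) (x y : A) :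
    LDT F A (x * y) = LinearMap.trace F A (LDR F A y * LDR F A x) := by
  have h : LDR F A (x * y) = LDR F A y * LDR F A x +
      (LDR F A y * LDL F A x - LDL F A x * LDR F A y) := by
    ext z
    have := LD_llin alt1 x z y
    simp only [LDR_apply, LDL_apply, LinearMap.add_apply, LinearMap.sub_apply, Module.End.mul_apply]
    rw [← add_sub_assoc, add_comm (z * x * y), this]; abel
  show LinearMap.trace F A (LDR F A (x * y)) = _
  rw [h, map_add, map_sub, LinearMap.trace_mul_comm F (LDR F A y) (LDL F A x), sub_self, add_zero]

theorem LDT_comm (alt1 : ∀ x y : A, (x * x) * y = x * (x * y)) (x y : A) :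
    LDT F A (x * y) = LDT F A (y * x) := by
  rw [LDT_mul alt1, LDT_mul alt1, LinearMap.trace_mul_comm]

theorem LDT_assoc [CharZero F] (alt1 : ∀ x y : A, (x * x) * y = x * (x * y))
    (alt2 : ∀ x y : A, (x * y) * y = x * (y * y)) (x y z : A) :
    LDT F A (x * y * z) = LDT F A (x * (y * z)) := by
  have hc := LDT_comm (F := F) alt1
  -- (x,y,z) = -(y,x,z) = (y,z,x)
  have h1 := congrArg (LDT F A) (LD_llin alt1 x y z)
  have h2 := congrArg (LDT F A) (LD_rlin alt2 x z y)
  have h3 := congrArg (LDT F A) (LD_llin alt1 y z x)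
  have h4 := congrArg (LDT F A) (LD_rlin alt2 y x z)
  simp only [map_add] at h1 h2 h3 h4
  have e1 := hc x (y * z)
  have e2 := hc y (z * x)
  have e3 := hc z (x * y)
  have e4 := hc y (x * z)
  have e5 := hc x (z * y)
  have e6 := hc z (y * x)
  have h : (3 : F) * LDT F A (x * y * z) = 3 * LDT F A (x * (y * z)) := by
    rw [e1] at h1 ⊢
    rw [e2] at h2 h3
    rw [e3] at h4
    linear_combination 2 * (h1 - h2) + (h3 - h4)
  exact mul_left_cancel₀ (by norm_num) h
end alt

section alt2
set_option linter.unusedSectionVars false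
variable {F A : Type*} [Field F] [CharZero F] [NonUnitalNonAssocRing A] [Module F A]
    [SMulCommClass F A A] [IsScalarTower F A A] [FiniteDimensional F A]

theorem LD_trace_pow (alt1 : ∀ x y : A, (x * x) * y = x * (x * y))
    (alt2 : ∀ x y : A, (x * y) * y = x * (y * y)) (x : A) (m : ℕ) :
    LinearMap.trace F A ((LDR F A x) ^ (m+1)) = LDT F A (((LDR F A x) ^ m) x) := by
  rw [← LD_pow_R alt1 alt2]; rfl

theorem LD_exists_unit (alt1 : ∀ x y : A, (x * x) * y = x * (x * y))
    (alt2 : ∀ x y : A, (x * y) * y = x * (y * y)) :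
    ∃ e : A, ∀ x, LDT F A (e * x) = LDT F A x := by
  let B : A →ₗ[F] Module.Dual F A := (LinearMap.mul F A).compr₂ (LDT F A)
  have hB : ∀ x y, B x y = LDT F A (x * y) := fun x y => rfl
  have hmem : LDT F A ∈ LinearMap.range B := by
    rw [← Subspace.dualCoannihilator_dualAnnihilator_eq (W := LinearMap.range B)]
    rw [Submodule.mem_dualAnnihilator]
    intro x hx
    rw [Submodule.mem_dualCoannihilator] at hx
    have hx' : ∀ y, LDT F A (y * x) = 0 := fun y => hx (B y) ⟨y, rfl⟩
    have hn : IsNilpotent (LDR F A x ^ 2) := by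
      apply LD_nilpotent_of_trace
      intro k
      rw [← pow_mul, show 2 * (k+1) = (2 * k + 1) + 1 by ring, LD_trace_pow alt1 alt2, pow_succ']
      exact hx' _
    have hn2 : IsNilpotent (LDR F A x) := by
      obtain ⟨m, hm⟩ := hn
      exact ⟨2 * m, by rw [pow_mul, hm]⟩
    exact (LinearMap.isNilpotent_trace_of_isNilpotent hn2).eq_zero
  obtain ⟨e, he⟩ := hmem
  exact ⟨e, fun x => by rw [← hB, he]⟩

theorem LD_T_zero (alt1 : ∀ x y : A, (x * x) * y = x * (x * y))
    (alt2 : ∀ x y : A, (x * y) * y = x * (y * y)) (k : ℕ) (φ : A →ₗ[F] A)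
    (hφ : ∀ x z : A, φ ((LDR F A x ^ (k+1)) z) = (LDR F A x ^ (k+1)) (φ z) +
      ∑ i : Fin (k+1), (LDR F A x ^ (k - (i:ℕ))) (((LDR F A x ^ (i:ℕ)) z) * φ x)) (y : A) :
    LDT F A (φ y) = 0 := by
  obtain ⟨e, he⟩ := LD_exists_unit (F := F) alt1 alt2
  have hc := LDT_comm (F := F) alt1
  have ha := LDT_assoc (F := F) alt1 alt2
  have hel : ∀ x w, LDT F A (e * x * w) = LDT F A (x * w) := fun x w => by rw [ha, he]
  have her : ∀ x w, LDT F A (x * e * w) = LDT F A (x * w) := fun x w => by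
    rw [ha, hc, ha, he, hc]
  have her1 : ∀ x, LDT F A (x * e) = LDT F A x := fun x => by rw [hc, he]
  -- the trace identity
  have h1 : ∀ x, LinearMap.trace F A (LDR F A x ^ k * LDR F A (φ x)) = 0 := by
    intro x
    have hop : φ * LDR F A x ^ (k+1) = LDR F A x ^ (k+1) * φ +
        ∑ i : Fin (k+1), LDR F A x ^ (k - (i:ℕ)) * (LDR F A (φ x) * LDR F A x ^ (i:ℕ)) := by
      ext z
      simpa [LinearMap.sum_apply] using hφ x z
    have htr := congrArg (LinearMap.trace F A) hop
    rw [map_add, LinearMap.trace_mul_comm F φ, left_eq_add, map_sum] at htr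
    have : ∀ i : Fin (k+1), LinearMap.trace F A
        (LDR F A x ^ (k - (i:ℕ)) * (LDR F A (φ x) * LDR F A x ^ (i:ℕ))) =
        LinearMap.trace F A (LDR F A x ^ k * LDR F A (φ x)) := by
      intro i
      rw [← mul_assoc, LinearMap.trace_mul_comm, ← mul_assoc, ← pow_add]
      congr 4
      have := i.2
      omega
    rw [Finset.sum_congr rfl (fun i _ => this i), Finset.sum_const, Finset.card_univ,
      Fintype.card_fin, nsmul_eq_mul] at htr
    exact (mul_eq_zero.1 htr).resolve_left (by exact_mod_cast Nat.succ_ne_zero k)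
  have hcongr : ∀ (x a b : A) (m : ℕ), (∀ w, LDT F A (a * w) = LDT F A (b * w)) →
      ∀ w, LDT F A ((LDR F A x ^ m) a * w) = LDT F A ((LDR F A x ^ m) b * w) := by
    intro x a b m hab
    induction m with
    | zero => simpa using hab
    | succ m ih =>
      intro w
      rw [pow_succ', Module.End.mul_apply, Module.End.mul_apply, LDR_apply, LDR_apply, ha, ha, ih]
  have h2 : ∀ (x w : A) (m : ℕ), LinearMap.trace F A (LDR F A x ^ m * LDR F A w) =
      LDT F A ((LDR F A x ^ m) e * w) := by
    intro x w m
    rcases m with _ | m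
    · rw [pow_zero, one_mul]; exact (he w).symm
    · have hs : (LDR F A x ^ (m+1)) e = (LDR F A x ^ m) (e * x) := by
        rw [pow_succ]; rfl
      rw [hs, ← LD_pow_R alt1 alt2, ← LDT_mul alt1, hc]
      exact (hcongr x _ _ m (fun w => hel x w) w).symm
  have h3 : ∀ (y : A) (m : ℕ) (w : A), ∃ P : Polynomial F, P.coeff 0 = LDT F A (e * w) ∧
      P.coeff 1 = m * LDT F A (y * w) ∧
      ∀ s, P.eval s = LDT F A ((LDR F A (e + s • y) ^ m) e * w) := by
    intro y m
    induction m with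
    | zero =>
      intro w
      refine ⟨Polynomial.C (LDT F A (e * w)), by simp, ?_, by simp⟩
      rw [Polynomial.coeff_C]; simp
    | succ m ih =>
      intro w
      obtain ⟨P, p0, p1, ps⟩ := ih (e * w)
      obtain ⟨Q, q0, q1, qs⟩ := ih (y * w)
      refine ⟨P + Polynomial.X * Q, ?_, ?_, ?_⟩
      · rw [Polynomial.coeff_add, p0, Polynomial.coeff_X_mul_zero, add_zero, he]
      · rw [Polynomial.coeff_add, p1, Polynomial.coeff_X_mul, q0, ← ha y e w, her, he]
        push_cast; ring
      · intro s
        rw [Polynomial.eval_add, Polynomial.eval_mul, Polynomial.eval_X, ps, qs, pow_succ',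
          Module.End.mul_apply, LDR_apply, ha, add_mul, smul_mul_assoc, mul_add, mul_smul_comm,
          map_add (LDT F A), map_smul (LDT F A), smul_eq_mul]
  have h4 : ∀ y, (k : F) * LDT F A (y * φ e) + LDT F A (φ y) = 0 := by
    intro y
    obtain ⟨P, p0, p1, ps⟩ := h3 y k (φ e)
    obtain ⟨Q, q0, q1, qs⟩ := h3 y k (φ y)
    have hz : P + Polynomial.X * Q = 0 := by
      apply Polynomial.funext
      intro s
      have := h1 (e + s • y)
      rw [h2, map_add φ, map_smul φ, mul_add, mul_smul_comm, map_add (LDT F A),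
        map_smul (LDT F A)] at this
      rw [Polynomial.eval_add, Polynomial.eval_mul, Polynomial.eval_X, ps, qs, Polynomial.eval_zero]
      exact this
    have := congrArg (fun p => Polynomial.coeff p 1) hz
    simp only [Polynomial.coeff_add, p1, Polynomial.coeff_zero] at this
    rw [Polynomial.coeff_X_mul, q0, he] at this
    exact this
  have hepow : ∀ (m : ℕ) (y w : A), LDT F A ((LDR F A e ^ m) y * w) = LDT F A (y * w) := by
    intro m
    induction m with
    | zero => simp
    | succ m ih => intro y w; rw [pow_succ', Module.End.mul_apply, LDR_apply, her, ih]
  have hepow1 : ∀ (m : ℕ) (y : A), LDT F A ((LDR F A e ^ m) y) = LDT F A y := by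
    intro m y
    rw [← her1, hepow, her1]
  have h5 : ∀ y, LDT F A (y * φ e) = 0 := by
    intro y
    have h := congrArg (LDT F A) (hφ e y)
    rw [map_add, hepow1, map_sum] at h
    simp only [hepow1, hepow] at h
    rw [Finset.sum_const, Finset.card_univ, Fintype.card_fin, nsmul_eq_mul] at h
    have ha1 := h4 y
    have ha2 := h4 ((LDR F A e ^ (k+1)) y)
    rw [hepow] at ha2
    have hz : ((k+1 : ℕ) : F) * LDT F A (y * φ e) = 0 := by
      linear_combination ha2 - ha1 - h
    exact (mul_eq_zero.1 hz).resolve_left (by exact_mod_cast Nat.succ_ne_zero k)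
  have := h4 y
  rwa [h5, mul_zero, zero_add] at this

theorem LD_nil_R (alt1 : ∀ x y : A, (x * x) * y = x * (x * y))
    (alt2 : ∀ x y : A, (x * y) * y = x * (y * y)) (hT : ∀ x, LDT F A x = 0) (x : A) :
    IsNilpotent (LDR F A x) := by
  apply LD_nilpotent_of_trace
  intro k
  rw [LD_trace_pow alt1 alt2, hT]

theorem LD_nil_L (alt1 : ∀ x y : A, (x * x) * y = x * (x * y))
    (alt2 : ∀ x y : A, (x * y) * y = x * (y * y)) (hT : ∀ x, LDT F A x = 0) (x : A) :
    IsNilpotent (LDL F A x) := by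
  obtain ⟨m, hm⟩ := LD_nil_R alt1 alt2 hT x
  refine ⟨m+1, ?_⟩
  rw [← LD_pow_L alt1 alt2, hm]
  simp

theorem LD_nil_all (alt1 : ∀ x y : A, (x * x) * y = x * (x * y))
    (alt2 : ∀ x y : A, (x * y) * y = x * (y * y)) (hT : ∀ x, LDT F A x = 0) :
    LDNil {f : A →ₗ[F] A | ∃ x, f = LDR F A x ∨ f = LDL F A x} := by
  have hR : LDNil ((LinearMap.range (LDR F A) : Submodule F (A →ₗ[F] A)) : Set (A →ₗ[F] A)) := by
    apply LDNil.jordan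
    · rintro _ ⟨x, rfl⟩ _ ⟨y, rfl⟩
      refine ⟨y * x + x * y, ?_⟩
      ext z
      have := LD_rlin alt2 y x z
      simp [this]
    · rintro _ ⟨x, rfl⟩
      exact LD_nil_R alt1 alt2 hT x
  have hL : LDNil ((LinearMap.range (LDL F A) : Submodule F (A →ₗ[F] A)) : Set (A →ₗ[F] A)) := by
    apply LDNil.jordan
    · rintro _ ⟨x, rfl⟩ _ ⟨y, rfl⟩
      refine ⟨x * y + y * x, ?_⟩
      ext z
      have := LD_llin alt1 x y z
      simp [this]
    · rintro _ ⟨x, rfl⟩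
      exact LD_nil_L alt1 alt2 hT x
  apply LDNil.of_step
  intro U hU hinv
  let X : Submodule F A := ⨅ x : A, U.comap (LDL F A x)
  have hX : ∀ v, v ∈ X ↔ ∀ x, x * v ∈ U := by
    intro v; simp [X, Submodule.mem_iInf]
  obtain ⟨v, -, hvU, hv⟩ := hL.rel ⊤ U (by simp) (by rwa [top_le_iff])
  have hvX : v ∈ X := (hX v).2 fun x => hv _ ⟨x, rfl⟩
  obtain ⟨u, huX, huU, hu⟩ := hR.rel X U (by
    rintro _ ⟨y, rfl⟩ v hv
    rw [hX] at hv ⊢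
    intro x
    rw [LDR_apply]
    -- x(vy) = (xv)y + (xy)v - x(yv)
    have h := LD_rlin alt2 v y x
    have h' : x * (v * y) = x * v * y + x * y * v - x * (y * v) := by rw [h]; abel
    rw [h']
    refine U.sub_mem (U.add_mem ?_ (hv _)) ?_
    · exact hinv (LDR F A y) ⟨y, Or.inl rfl⟩ _ (hv x)
    · exact hinv (LDL F A x) ⟨x, Or.inr rfl⟩ _ (hv y)) (fun h => hvU (h hvX))
  refine ⟨u, huU, ?_⟩
  rintro f ⟨x, rfl | rfl⟩
  · exact hu _ ⟨x, rfl⟩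
  · exact (hX u).1 huX x
end alt2

theorem LD_foldl_const {F A : Type*} [Field F] [NonUnitalNonAssocRing A] [Module F A]
    [SMulCommClass F A A] [IsScalarTower F A A] (x : A) (k : ℕ) (a : A) :
    (List.ofFn (fun _ : Fin k => x)).foldl (· * ·) a = (LDR F A x ^ k) a := by
  induction k generalizing a with
  | zero => simp
  | succ k ih => rw [List.ofFn_succ, List.foldl_cons, ih, pow_succ]; rfl

theorem LD_foldl_update {F A : Type*} [Field F] [NonUnitalNonAssocRing A] [Module F A]
    [SMulCommClass F A A] [IsScalarTower F A A] (x w : A) (k : ℕ) (a : A) (j : Fin (k+1)) :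
    (List.ofFn (Function.update (fun _ : Fin (k+1) => x) j w)).foldl (· * ·) a =
      (LDR F A x ^ (k - (j:ℕ))) (((LDR F A x ^ (j:ℕ)) a) * w) := by
  induction k generalizing a with
  | zero =>
    have : j = 0 := Fin.ext (by omega)
    subst this
    simp
  | succ k ih =>
    refine Fin.cases ?_ (fun j => ?_) j
    · have h : ∀ i : Fin (k+1), Function.update (fun _ : Fin (k+1+1) => x) 0 w i.succ = x :=
        fun i => by simp
      rw [List.ofFn_succ, List.foldl_cons]
      simp only [h]
      rw [LD_foldl_const (F := F)]
      simp
    · have h : ∀ i : Fin (k+1), Function.update (fun _ : Fin (k+1+1) => x) j.succ w i.succ =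
          Function.update (fun _ : Fin (k+1) => x) j w i :=
        fun i => by simp [Function.update_apply]
      rw [List.ofFn_succ, List.foldl_cons]
      simp only [h]
      have h0 : Function.update (fun _ : Fin (k+1+1) => x) j.succ w 0 = x := by
        simp [Function.update_apply, (Fin.succ_ne_zero j).symm]
      rw [h0]
      have e1 : (LDR F A x ^ ((j.succ : Fin (k+1+1)) : ℕ)) a = (LDR F A x ^ (j:ℕ)) (a * x) := by
        rw [Fin.val_succ, pow_succ]; rfl
      have e2 : k + 1 - ((j.succ : Fin (k+1+1)) : ℕ) = k - (j:ℕ) := by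
        rw [Fin.val_succ]; omega
      rw [e1, e2]
      exact ih (a * x) j

theorem LD_leibniz {F A : Type*} [Field F] [NonUnitalNonAssocRing A] [Module F A]
    [SMulCommClass F A A] [IsScalarTower F A A] (k : ℕ) (φ : A →ₗ[F] A)
    (h : IsLeibnizDer (k+1+1) φ) (x z : A) :
    φ ((LDR F A x ^ (k+1)) z) = (LDR F A x ^ (k+1)) (φ z) +
      ∑ i : Fin (k+1), (LDR F A x ^ (k - (i:ℕ))) (((LDR F A x ^ (i:ℕ)) z) * φ x) := by
  have h1 := h (Fin.cons z (fun _ => x))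
  rw [Fin.sum_univ_succ] at h1
  simp only [Fin.cons_zero, Fin.cons_succ, Fin.update_cons_zero, ← Fin.cons_update,
    List.ofFn_cons, lnProd] at h1
  rw [LD_foldl_const (F := F), LD_foldl_const (F := F)] at h1
  rw [h1]
  congr 1
  exact Finset.sum_congr rfl fun i _ => LD_foldl_update x (φ x) k z i

theorem LD_isProd_foldl {A : Type*} [Mul A] (l : List A) (a : A) (m : ℕ) (h : IsProd m a) :
    IsProd (m + l.length) (l.foldl (· * ·) a) := by
  induction l generalizing a m with
  | nil => simpa using h
  | cons b l ih =>
    have := ih (a * b) (m+1) (h.mul (IsProd.single b))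
    rw [List.foldl_cons, List.length_cons]
    rwa [add_assoc, add_comm 1] at this

theorem LD_lnProd_zero {A : Type*} [NonUnitalNonAssocRing A] (n : ℕ)
    (h : ∀ x : A, IsProd (n+1) x → x = 0) (x : Fin (n+1+1) → A) : lnProd (List.ofFn x) = 0 := by
  have h2 : lnProd (List.ofFn x) =
      lnProd (List.ofFn (fun i : Fin (n+1) => x i.castSucc)) * x (Fin.last _) := by
    rw [List.ofFn_succ' x, List.ofFn_succ]
    simp [lnProd, List.foldl_append]
  rw [h2, h (lnProd (List.ofFn (fun i : Fin (n+1) => x i.castSucc))) ?_, zero_mul]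
  rw [List.ofFn_succ]
  have := LD_isProd_foldl (List.ofFn (fun i : Fin n => x i.succ.castSucc)) (x (Fin.castSucc 0)) 1
    (IsProd.single _)
  rw [List.length_ofFn, add_comm] at this
  exact this

theorem LD_isProd_mem {A F : Type*} [Field F] [NonUnitalNonAssocRing A] [Module F A]
    (M : ℕ → Submodule F A) (hM : Monotone M) (N : ℕ) (hN : M N = ⊤)
    (hl : ∀ i x, ∀ v ∈ M (i+1), x * v ∈ M i) (hr : ∀ i x, ∀ v ∈ M (i+1), v * x ∈ M i)
    (k : ℕ) (hk : k ≤ N) (n : ℕ) (hn : 2 ^ k ≤ n) (x : A) (hx : IsProd n x) : x ∈ M (N - k) := by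
  induction k generalizing n x with
  | zero => rw [Nat.sub_zero, hN]; trivial
  | succ k ih =>
    have e : N - k = N - (k+1) + 1 := by omega
    have hpos : 1 ≤ 2 ^ k := Nat.one_le_two_pow
    rw [pow_succ] at hn
    cases hx with
    | single => omega
    | @mul a b u v hu hv =>
      by_cases hab : 2 ^ k ≤ a
      · have := ih (by omega) a hab u hu
        rw [e] at this
        exact hr _ _ _ this
      · have := ih (by omega) b (by omega) v hv
        rw [e] at this
        exact hl _ _ _ this

/-- A finite-dimensional alternative algebra over a field of characteristic zero is
nilpotent iff it admits an invertible Leibniz-derivation of some order `n ≥ 2`. -/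
theorem alternative_nilpotent_iff_invertible_leibniz_derivation
    {F A : Type*} [Field F] [CharZero F]
    [NonUnitalNonAssocRing A] [Module F A] [SMulCommClass F A A] [IsScalarTower F A A]
    [FiniteDimensional F A]
    (alt1 : ∀ x y : A, (x * x) * y = x * (x * y))
    (alt2 : ∀ x y : A, (x * y) * y = x * (y * y)) :
    (∃ n : ℕ, 1 ≤ n ∧ ∀ x : A, IsProd n x → x = 0) ↔
      (∃ n : ℕ, 2 ≤ n ∧ ∃ φ : A →ₗ[F] A, Function.Bijective φ ∧ IsLeibnizDer n φ) := by
  constructor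
  · rintro ⟨n, hn, h⟩
    obtain ⟨m, rfl⟩ : ∃ m, n = m + 1 := ⟨n - 1, by omega⟩
    refine ⟨m + 1 + 1, by omega, LinearMap.id, Function.bijective_id, ?_⟩
    intro x
    rw [LD_lnProd_zero m h, map_zero]
    exact (Finset.sum_eq_zero fun i _ => LD_lnProd_zero m h _).symm
  · rintro ⟨n, hn, φ, hb, h⟩
    obtain ⟨k, rfl⟩ : ∃ k, n = k + 1 + 1 := ⟨n - 2, by omega⟩
    have hT : ∀ x, LDT F A x = 0 := by
      intro x
      obtain ⟨y, rfl⟩ := hb.2 x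
      exact LD_T_zero alt1 alt2 k φ (LD_leibniz k φ h) y
    obtain ⟨M, hM, h0, ⟨N, hN⟩, hs⟩ := LD_nil_all alt1 alt2 hT
    refine ⟨2 ^ N, Nat.one_le_two_pow, fun x hx => ?_⟩
    have := LD_isProd_mem M hM N hN (fun i x v hv => hs i (LDL F A x) ⟨x, Or.inr rfl⟩ v hv)
      (fun i x v hv => hs i (LDR F A x) ⟨x, Or.inl rfl⟩ v hv) N le_rfl (2 ^ N) le_rfl x hx
    rwa [Nat.sub_self, h0, Submodule.mem_bot] at this
end

section
/- Let A be a finite-dimensional alternative algebra over a field of characteristic zero that is nilpotent of index s (every product of s elements, under any distribution of parentheses, is zero, and some product of s−1 elements is nonzero). Set n = ⌊s/2⌋ + 1, let Aⁿ denote the linear span of all products of at least n elements of A (with arbitrary bracketing), and let W be a linear complement to Aⁿ in A, so A = W ⊕ Aⁿ. Then the linear map φ defined by φ(w) = w for w ∈ W and φ(x) = n·x for x ∈ Aⁿ is an invertible Leibniz-derivation of A of order n. -/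
theorem IsProd.one_le {A : Type*} [Mul A] {m : ℕ} {x : A} (h : IsProd m x) : 1 ≤ m := by
  induction h with
  | single a => exact le_rfl
  | mul _ _ h1 h2 => omega

theorem IsProd.coarsen {A : Type*} [Mul A] {m : ℕ} {x : A} (h : IsProd m x) :
    ∀ k, 1 ≤ k → k ≤ m → IsProd k x := by
  induction h with
  | single a =>
    intro k h1 h2
    obtain rfl : k = 1 := by omega
    exact IsProd.single a
  | @mul m n x y hx hy ihx ihy =>
    intro k h1 h2
    have hm := hx.one_le
    have hn := hy.one_le
    by_cases hk : k = 1
    · subst hk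
      exact IsProd.single _
    · have : IsProd (min m (k - 1) + (k - min m (k - 1))) (x * y) :=
        IsProd.mul (ihx _ (by omega) (by omega)) (ihy _ (by omega) (by omega))
      rwa [show min m (k - 1) + (k - min m (k - 1)) = k by omega] at this

/-- Span of products of at least `k` elements. -/
def prodSpan (F A : Type*) [Field F] [NonUnitalNonAssocRing A] [Module F A] (k : ℕ) :
    Submodule F A := Submodule.span F {x : A | ∃ m : ℕ, k ≤ m ∧ IsProd m x}

section
variable {F A : Type*} [Field F] [NonUnitalNonAssocRing A] [Module F A]

theorem prodSpan_one (x : A) : x ∈ prodSpan F A 1 :=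
  Submodule.subset_span ⟨1, le_rfl, IsProd.single x⟩

theorem prodSpan_anti {j k : ℕ} (h : j ≤ k) : prodSpan F A k ≤ prodSpan F A j :=
  Submodule.span_mono fun _ ⟨m, hm, hx⟩ => ⟨m, h.trans hm, hx⟩

theorem prodSpan_mul [SMulCommClass F A A] [IsScalarTower F A A] {j k : ℕ} {x y : A}
    (hx : x ∈ prodSpan F A j) (hy : y ∈ prodSpan F A k) : x * y ∈ prodSpan F A (j + k) := by
  induction hx using Submodule.span_induction with
  | zero => rw [zero_mul]; exact zero_mem _
  | add a b _ _ ha hb => rw [add_mul]; exact add_mem ha hb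
  | smul c a _ ha => rw [smul_mul_assoc]; exact Submodule.smul_mem _ _ ha
  | mem a ha =>
    obtain ⟨p, hp, ha⟩ := ha
    induction hy using Submodule.span_induction with
    | zero => rw [mul_zero]; exact zero_mem _
    | add a b _ _ ha hb => rw [mul_add]; exact add_mem ha hb
    | smul c a _ ha => rw [mul_smul_comm]; exact Submodule.smul_mem _ _ ha
    | mem b hb =>
      obtain ⟨q, hq, hb⟩ := hb
      exact Submodule.subset_span ⟨p + q, by omega, IsProd.mul ha hb⟩

theorem foldl_mem [SMulCommClass F A A] [IsScalarTower F A A] (l : List A) :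
    ∀ (k : ℕ) (a : A), a ∈ prodSpan F A k →
      l.foldl (· * ·) a ∈ prodSpan F A (k + l.length) := by
  induction l with
  | nil => intro k a ha; simpa using ha
  | cons b l ih =>
    intro k a ha
    have := ih (k + 1) (a * b) (prodSpan_mul ha (prodSpan_one b))
    simp only [List.foldl_cons, List.length_cons]
    rwa [show k + (l.length + 1) = k + 1 + l.length by omega]

theorem foldl_set_mem [SMulCommClass F A A] [IsScalarTower F A A] (l : List A) (k : ℕ) (d : A)
    (hd : d ∈ prodSpan F A k) :
    ∀ (i : ℕ) (j : ℕ) (a : A), i < l.length → a ∈ prodSpan F A j →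
      (l.set i d).foldl (· * ·) a ∈ prodSpan F A (j + k + l.length - 1) := by
  induction l with
  | nil => intro i j a hi; simp at hi
  | cons b l ih =>
    intro i j a hi ha
    cases i with
    | zero =>
      have := foldl_mem l (j + k) (a * d) (prodSpan_mul ha hd)
      simpa using this
    | succ i =>
      have := ih i (j + 1) (a * b) (by simpa using hi) (prodSpan_mul ha (prodSpan_one b))
      simp only [List.set_cons_succ, List.foldl_cons, List.length_cons]
      rwa [show j + k + (l.length + 1) - 1 = j + 1 + k + l.length - 1 by omega]

theorem lnProd_set_mem [SMulCommClass F A A] [IsScalarTower F A A] (l : List A) (k : ℕ) (d : A)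
    (hd : d ∈ prodSpan F A k) (i : ℕ) (hi : i < l.length) :
    lnProd (l.set i d) ∈ prodSpan F A (k + l.length - 1) := by
  cases l with
  | nil => simp at hi
  | cons b l =>
    cases i with
    | zero => simpa [lnProd] using foldl_mem l k d hd
    | succ i =>
      have := foldl_set_mem l k d hd i 1 b (by simpa using hi) (prodSpan_one b)
      simp only [List.set_cons_succ, lnProd, List.length_cons]
      rwa [show k + (l.length + 1) - 1 = 1 + k + l.length - 1 by omega]

theorem foldl_add' (l : List A) : ∀ a b : A,
    l.foldl (· * ·) (a + b) = l.foldl (· * ·) a + l.foldl (· * ·) b := by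
  induction l with
  | nil => intro a b; rfl
  | cons c l ih => intro a b; simp only [List.foldl_cons, add_mul, ih]

theorem foldl_set_add (l : List A) (c d : A) : ∀ (i : ℕ) (a : A), i < l.length →
    (l.set i (c + d)).foldl (· * ·) a
      = (l.set i c).foldl (· * ·) a + (l.set i d).foldl (· * ·) a := by
  induction l with
  | nil => intro i a hi; simp at hi
  | cons b l ih =>
    intro i a hi
    cases i with
    | zero => simp only [List.set_cons_zero, List.foldl_cons, mul_add, foldl_add']
    | succ i =>
      simp only [List.set_cons_succ, List.foldl_cons]
      exact ih i _ (by simpa using hi)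

theorem lnProd_set_add (l : List A) (c d : A) (i : ℕ) (hi : i < l.length) :
    lnProd (l.set i (c + d)) = lnProd (l.set i c) + lnProd (l.set i d) := by
  cases l with
  | nil => simp at hi
  | cons b l =>
    cases i with
    | zero => simp only [List.set_cons_zero, lnProd, foldl_add']
    | succ i =>
      simp only [List.set_cons_succ, lnProd]
      exact foldl_set_add l c d i b (by simpa using hi)

theorem ofFn_update' {n : ℕ} (x : Fin n → A) (i : Fin n) (c : A) :
    List.ofFn (Function.update x i c) = (List.ofFn x).set i c := by
  apply List.ext_getElem
  · simp
  · intro m h1 h2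
    simp only [List.getElem_ofFn, List.getElem_set, Function.update_apply, Fin.ext_iff]
    by_cases h : m = i
    · simp [h]
    · simp [h, Ne.symm h]

end

/-- If `A` is a nilpotent alternative algebra of nilpotency index `s` over a field of
characteristic zero, `n = ⌊s/2⌋ + 1`, `Aⁿ` is the span of products of at least `n`
elements, and `W` is a linear complement of `Aⁿ`, then the linear map `φ` acting as the
identity on `W` and as `n • ·` on `Aⁿ` is an invertible Leibniz-derivation of order `n`. -/
theorem nilpotent_alternative_has_invertible_leibniz_derivation
    {F A : Type*} [Field F] [CharZero F]
    [NonUnitalNonAssocRing A] [Module F A] [SMulCommClass F A A] [IsScalarTower F A A]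
    [FiniteDimensional F A]
    (alt1 : ∀ x y : A, (x * x) * y = x * (x * y))
    (alt2 : ∀ x y : A, (x * y) * y = x * (y * y))
    (s : ℕ)
    (hnil : ∀ x : A, IsProd s x → x = 0)
    (hindex : ∃ x : A, IsProd (s - 1) x ∧ x ≠ 0)
    (n : ℕ) (hn : n = s / 2 + 1)
    (An : Submodule F A)
    (hAn : An = Submodule.span F {x : A | ∃ m : ℕ, n ≤ m ∧ IsProd m x})
    (W : Submodule F A) (hW : IsCompl W An)
    (φ : A →ₗ[F] A)
    (hφW : ∀ w ∈ W, φ w = w)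
    (hφAn : ∀ x ∈ An, φ x = n • x) :
    Function.Bijective φ ∧ IsLeibnizDer n φ := by
  have hs : 2 ≤ s := by
    obtain ⟨x, hx, -⟩ := hindex
    have := hx.one_le
    omega
  have hAn' : An = prodSpan F A n := hAn
  have hbot : ∀ k, s ≤ k → ∀ x ∈ prodSpan F A k, x = 0 := by
    intro k hk x hx
    have : prodSpan F A k ≤ ⊥ := by
      refine Submodule.span_le.2 ?_
      rintro y ⟨m, hm, hy⟩
      exact hnil y (hy.coarsen s (by omega) (by omega))
    simpa using this hx
  have hn0 : (n : F) ≠ 0 := by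
    have : n ≠ 0 := by omega
    exact_mod_cast this
  have hdec : ∀ x : A, ∃ w ∈ W, ∃ a ∈ An, w + a = x := by
    intro x
    have : x ∈ W ⊔ An := by rw [hW.sup_eq_top]; trivial
    exact Submodule.mem_sup.1 this
  refine ⟨?_, ?_⟩
  · have hsurj : Function.Surjective φ := by
      intro y
      obtain ⟨w, hw, a, ha, rfl⟩ := hdec y
      refine ⟨w + (n : F)⁻¹ • a, ?_⟩
      rw [map_add, hφW w hw, hφAn _ (An.smul_mem _ ha), ← Nat.cast_smul_eq_nsmul F, smul_smul,
        mul_inv_cancel₀ hn0, one_smul]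
    exact ⟨LinearMap.injective_iff_surjective.2 hsurj, hsurj⟩
  · intro x
    have hterm : ∀ i : Fin n, lnProd (List.ofFn (Function.update x i (φ (x i))))
        = lnProd (List.ofFn x) := by
      intro i
      obtain ⟨w, hw, a, ha, hwa⟩ := hdec (x i)
      have hi : (i : ℕ) < (List.ofFn x).length := by simp
      have hz : ∀ b ∈ An, lnProd ((List.ofFn x).set i b) = 0 := by
        intro b hb
        rw [hAn'] at hb
        refine hbot _ ?_ _ (lnProd_set_mem (F := F) _ n b hb i hi)
        rw [List.length_ofFn]
        omega
      have h1 : lnProd (List.ofFn x) = lnProd ((List.ofFn x).set i w) := by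
        conv_lhs => rw [← Function.update_eq_self i x, ofFn_update', ← hwa]
        rw [lnProd_set_add _ _ _ _ hi, hz a ha, add_zero]
      rw [h1, ofFn_update', ← hwa, map_add, hφW w hw, lnProd_set_add _ _ _ _ hi,
        hz (φ a) (by rw [hφAn a ha]; exact nsmul_mem ha n), add_zero]
    rw [Finset.sum_congr rfl fun i _ => hterm i, Finset.sum_const, Finset.card_univ,
      Fintype.card_fin]
    apply hφAn
    rw [hAn']
    have i : Fin n := ⟨0, by omega⟩
    have h := lnProd_set_mem (F := F) (List.ofFn x) 1 (x i) (prodSpan_one _) i (by simp)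
    rw [← ofFn_update', Function.update_eq_self, List.length_ofFn] at h
    rwa [show 1 + n - 1 = n by omega] at h
end

section
/- Let F be a field of characteristic 3. Then there exists a 7-dimensional nilpotent alternative F-algebra A such that every derivation D of A is singular, i.e., there exists x ≠ 0 in A with D(x) = 0. (Such an algebra is given by the basis {e₁, e₂, e₃, u₁, u₂, v, w} with nonzero products e₁² = u₁, e₂² = u₂, e₂e₃ = e₃e₂ = −v, e₃e₁ = u₂, e₁e₃ = u₂, e₁u₁ = u₁e₁ = v, e₂u₂ = u₂e₂ = w, e₁v = ve₁ = u₁² = w.) -/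
/-- `IsProdM mul n a` : `a` is a product (with respect to the multiplication `mul`) of
`n` elements under some distribution of parentheses. -/
inductive IsProdM {A : Type*} (mul : A → A → A) : ℕ → A → Prop
  | single (a : A) : IsProdM mul 1 a
  | mul {m n : ℕ} {x y : A} :
      IsProdM mul m x → IsProdM mul n y → IsProdM mul (m + n) (mul x y)

def pr {F : Type*} [Field F] (x y : Fin 7 → F) : Fin 7 → F :=
  ![0, 0, 0, x 0 * y 0, x 1 * y 1 + x 0 * y 2 + x 2 * y 0,
    -(x 1 * y 2 + x 2 * y 1) + x 0 * y 3 + x 3 * y 0,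
    x 1 * y 4 + x 4 * y 1 + x 0 * y 5 + x 5 * y 0 + x 3 * y 3]

def prL (F : Type*) [Field F] : (Fin 7 → F) →ₗ[F] (Fin 7 → F) →ₗ[F] (Fin 7 → F) :=
  LinearMap.mk₂ F pr
    (by intro a b c; ext i; fin_cases i <;> simp [pr] <;> ring)
    (by intro a b c; ext i; fin_cases i <;> simp [pr] <;> ring)
    (by intro a b c; ext i; fin_cases i <;> simp [pr] <;> ring)
    (by intro a b c; ext i; fin_cases i <;> simp [pr] <;> ring)

lemma prL_apply {F : Type*} [Field F] (x y : Fin 7 → F) : prL F x y = pr x y := rfl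

lemma pr_nil {F : Type*} [Field F] (n : ℕ) (x : Fin 7 → F)
    (h : IsProdM (fun a b => prL F a b) n x) :
    1 ≤ n ∧ (2 ≤ n → x 0 = 0 ∧ x 1 = 0 ∧ x 2 = 0) ∧ (3 ≤ n → x 3 = 0 ∧ x 4 = 0) ∧
      (4 ≤ n → x 5 = 0) ∧ (5 ≤ n → x 6 = 0) := by
  induction h with
  | single a => simp
  | @mul m n x y _ _ ihx ihy =>
    obtain ⟨a1, a2, a3, a4, a5⟩ := ihx
    obtain ⟨b1, b2, b3, b4, b5⟩ := ihy
    simp only [prL_apply]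
    refine ⟨by omega, fun h => ⟨by simp [pr], by simp [pr], by simp [pr]⟩, ?_, ?_, ?_⟩
    all_goals
      intro h
      simp only [pr, Matrix.cons_val]
      rcases (by omega : m = 1 ∨ m = 2 ∨ m = 3 ∨ 4 ≤ m) with rfl | rfl | rfl | hm <;>
      rcases (by omega : n = 1 ∨ n = 2 ∨ n = 3 ∨ 4 ≤ n) with rfl | rfl | rfl | hn <;>
      grind

/-- Over any field of characteristic 3 there exists a 7-dimensional nilpotent alternative
algebra (a bilinear multiplication on `F⁷`) all of whose derivations are singular. -/
theorem exists_nilpotent_alternative_with_singular_derivations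
    (F : Type*) [Field F] [CharP F 3] :
    ∃ m : (Fin 7 → F) →ₗ[F] (Fin 7 → F) →ₗ[F] (Fin 7 → F),
      (∀ x y : Fin 7 → F, m (m x x) y = m x (m x y)) ∧
      (∀ x y : Fin 7 → F, m (m x y) y = m x (m y y)) ∧
      (∃ n : ℕ, 1 ≤ n ∧ ∀ x : Fin 7 → F, IsProdM (fun a b => m a b) n x → x = 0) ∧
      (∀ D : (Fin 7 → F) →ₗ[F] (Fin 7 → F),
        (∀ x y : Fin 7 → F, D (m x y) = m (D x) y + m x (D y)) →
        ∃ x : Fin 7 → F, x ≠ 0 ∧ D x = 0) := by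
  have h3 : (3 : F) = 0 := by exact_mod_cast CharP.cast_eq_zero F 3
  refine ⟨prL F, ?_, ?_, ⟨5, by norm_num, ?_⟩, ?_⟩
  · intro x y
    simp only [prL_apply]
    ext i
    fin_cases i <;> simp [pr] <;> grind
  · intro x y
    simp only [prL_apply]
    ext i
    fin_cases i <;> simp [pr] <;> grind
  · intro x hx
    obtain ⟨-, h1, h2, h4, h5⟩ := pr_nil 5 x hx
    ext i
    fin_cases i <;> simp_all
  · intro D hD
    simp only [prL_apply] at hD
    have hu : pr (![0,1,0,0,0,0,0] : Fin 7 → F) ![0,1,0,0,0,0,0] = ![0,0,0,0,1,0,0] := by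
      ext i
      fin_cases i <;> simp [pr]
    have hw : pr (![0,1,0,0,0,0,0] : Fin 7 → F) ![0,0,0,0,1,0,0] = ![0,0,0,0,0,0,1] := by
      ext i
      fin_cases i <;> simp [pr]
    refine ⟨![0,0,0,0,0,0,1], fun h => by simpa using congrFun h 6, ?_⟩
    have e1 := hD ![0,1,0,0,0,0,0] ![0,1,0,0,0,0,0]
    have e2 := hD ![0,1,0,0,0,0,0] ![0,0,0,0,1,0,0]
    rw [hu] at e1
    rw [hw, e1] at e2
    rw [e2]
    generalize D ![0,1,0,0,0,0,0] = d
    ext i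
    fin_cases i <;> simp [pr] <;> grind
end

section
/- Let A be a finite-dimensional associative algebra over a field of characteristic zero. Then A is nilpotent if and only if A admits an invertible (bijective) Leibniz-derivation of some order n ≥ 2. -/
theorem aux_trace {F V : Type*} [Field F] [CharZero F] [AddCommGroup V] [Module F V]
    [FiniteDimensional F V] (T : Module.End F V) (K : ℕ)
    (h : ∀ k, K ≤ k → LinearMap.trace F V (T ^ k) = 0) : IsNilpotent T := by
  have hint : IsIntegral F T := Algebra.IsIntegral.isIntegral T
  have hp : minpoly F T ≠ 0 := minpoly.ne_zero hint
  obtain ⟨q, hq, hnd⟩ := Polynomial.exists_eq_pow_rootMultiplicity_mul_and_not_dvd _ hp 0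
  set s := Polynomial.rootMultiplicity 0 (minpoly F T) with hs
  simp only [map_zero, sub_zero] at hq hnd
  have hcop : IsCoprime ((Polynomial.X : Polynomial F) ^ (K + s)) q :=
    ((Polynomial.irreducible_X.coprime_iff_not_dvd).2 hnd).pow_left
  obtain ⟨a, b, hab⟩ := hcop
  have hz : T ^ s * Polynomial.aeval T q = 0 := by
    have := minpoly.aeval F T
    rw [hq] at this
    simpa using this
  set e := Polynomial.aeval T (a * Polynomial.X ^ (K + s)) with he
  have h1 : e + Polynomial.aeval T (b * q) = 1 := by
    rw [he, ← map_add, hab, map_one]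
  have h2 : e * Polynomial.aeval T (b * q) = 0 := by
    rw [he, ← map_mul, show a * Polynomial.X ^ (K + s) * (b * q) =
      (a * Polynomial.X ^ K * b) * (Polynomial.X ^ s * q) by ring, map_mul]
    simp [hz]
  have hid : IsIdempotentElem e := by
    have : e * (e + Polynomial.aeval T (b * q)) = e := by rw [h1, mul_one]
    rw [mul_add, h2, add_zero] at this
    exact this
  have htr : LinearMap.trace F V e = 0 := by
    rw [he, Polynomial.aeval_eq_sum_range]
    rw [map_sum]
    refine Finset.sum_eq_zero fun i _ => ?_
    rw [map_smul, Polynomial.coeff_mul_X_pow']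
    split_ifs with hi
    · rw [h i (by omega), smul_zero]
    · simp
  have he0 : e = 0 := by
    have := LinearMap.IsIdempotentElem.isProj_range e hid
    have h3 := this.trace
    rw [htr] at h3
    have h4 : Module.finrank F (LinearMap.range e) = 0 := by exact_mod_cast h3.symm
    exact LinearMap.range_eq_bot.1 (Submodule.finrank_eq_zero.1 h4)
  refine ⟨s, ?_⟩
  rw [he0, zero_add] at h1
  calc T ^ s = T ^ s * Polynomial.aeval T (b * q) := by rw [h1, mul_one]
    _ = 0 := by rw [mul_comm b q, map_mul, ← mul_assoc, hz, zero_mul]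

theorem aux_nil {F A : Type*} [Field F]
    [NonUnitalRing A] [Module F A] [SMulCommClass F A A] [IsScalarTower F A A]
    [FiniteDimensional F A] (h : ∀ a : A, IsNilpotent (LinearMap.mul F A a)) :
    ∃ k : ℕ, ∀ l : List A, l.length = k → ∀ v : A, (l.map (LinearMap.mul F A)).prod v = 0 := by
  have key : ∀ W : Submodule F A, (∀ a : A, ∀ w ∈ W, a * w ∈ W) →
      ∃ k : ℕ, ∀ l : List A, l.length = k → ∀ v : A, (l.map (LinearMap.mul F A)).prod v ∈ W := by
    intro W
    induction W using WellFoundedGT.induction with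
    | ind W ih =>
    intro hW
    by_cases htop : W = ⊤
    · exact ⟨0, fun l _ v => by simp [htop]⟩
    let S : Set (Submodule F A) := {W' | W < W' ∧ ∀ a : A, ∀ w ∈ W', a * w ∈ W'}
    have hS : S.Nonempty := ⟨⊤, lt_top_iff_ne_top.2 htop, fun _ _ _ => trivial⟩
    obtain ⟨W', ⟨hlt, hW'⟩, hmin⟩ := WellFounded.has_min (wellFounded_lt (α := Submodule F A)) S hS
    have hsub : ∀ v ∈ W', ∀ a : A, a * v ∈ W := by
      intro v hv
      by_cases hvW : v ∈ W
      · exact fun a => hW a v hvW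
      by_contra hcon
      push Not at hcon
      obtain ⟨c, hc⟩ := hcon
      let U : Submodule F A := W ⊔ LinearMap.range ((LinearMap.mul F A).flip v)
      have hUle : U ≤ W' := by
        refine sup_le hlt.le ?_
        rintro _ ⟨a, rfl⟩
        exact hW' a v hv
      have hU : U ∈ S := by
        refine ⟨lt_of_le_of_ne le_sup_left ?_, ?_⟩
        · intro hEq
          apply hc
          rw [hEq]
          exact Submodule.mem_sup_right ⟨c, rfl⟩
        · intro a w hw
          obtain ⟨w1, hw1, _, ⟨b, rfl⟩, rfl⟩ := Submodule.mem_sup.1 hw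
          rw [mul_add]
          refine Submodule.add_mem_sup (hW a w1 hw1) ⟨a * b, ?_⟩
          simp [mul_assoc]
      have hUeq : U = W' := by
        by_contra hne
        exact hmin U hU (lt_of_le_of_ne hUle hne)
      rw [← hUeq] at hv
      obtain ⟨w, hw, _, ⟨a, rfl⟩, hsum⟩ := Submodule.mem_sup.1 hv
      have hav : v - a * v ∈ W := by
        have : v - a * v = w := by
          conv_lhs => lhs; rw [← hsum]
          simp
        rwa [this]
      have hk : ∀ k : ℕ, v - ((LinearMap.mul F A a) ^ k) v ∈ W := by
        intro k
        induction k with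
        | zero => simp
        | succ k ihk =>
          have := W.add_mem hav (hW a _ ihk)
          rw [pow_succ']
          simpa [mul_sub] using this
      obtain ⟨k, hk0⟩ := h a
      have := hk k
      rw [hk0] at this
      exact hvW (by simpa using this)
    obtain ⟨k, hk⟩ := ih W' hlt hW'
    refine ⟨k + 1, ?_⟩
    intro l hl v
    match l, hl with
    | a :: l, hl =>
      simp only [List.map_cons, List.prod_cons, Module.End.mul_apply, LinearMap.mul_apply_apply]
      exact hsub _ (hk l (by simpa using hl) v) a
  obtain ⟨k, hk⟩ := key ⊥ (by intro a w hw; simp_all)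
  exact ⟨k, fun l hl v => by simpa using hk l hl v⟩

theorem aux_lnProd {F A : Type*} [Field F]
    [NonUnitalRing A] [Module F A] [SMulCommClass F A A] [IsScalarTower F A A]
    (l : List A) (y : A) : lnProd (l ++ [y]) = (l.map (LinearMap.mul F A)).prod y := by
  have h : ∀ (l : List A) (a y : A), (l ++ [y]).foldl (· * ·) a =
      a * (l.map (LinearMap.mul F A)).prod y := by
    intro l
    induction l with
    | nil => intro a y; simp
    | cons b l ih =>
      intro a y
      rw [List.cons_append, List.foldl_cons, ih]
      simp [mul_assoc]
  cases l with
  | nil => simp [lnProd]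
  | cons b l =>
    rw [List.cons_append]
    change (l ++ [y]).foldl (· * ·) b = _
    rw [h]
    simp

theorem aux_snoc {F A : Type*} [Field F]
    [NonUnitalRing A] [Module F A] [SMulCommClass F A A] [IsScalarTower F A A]
    {m : ℕ} (x : Fin m → A) (y : A) :
    lnProd (List.ofFn (Fin.snoc x y : Fin (m + 1) → A)) =
      ((List.ofFn x).map (LinearMap.mul F A)).prod y := by
  rw [← aux_lnProd, List.ofFn_succ']
  simp

/-- the trace identity -/
theorem aux_tr_id {F A : Type*} [Field F]
    [NonUnitalRing A] [Module F A] [SMulCommClass F A A] [IsScalarTower F A A]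
    [FiniteDimensional F A] {m : ℕ} (φ : A →ₗ[F] A) (hφ : IsLeibnizDer (m + 1) φ)
    (x : Fin m → A) :
    ∑ i : Fin m, LinearMap.trace F A
      ((List.ofFn (Function.update x i (φ (x i)))).map (LinearMap.mul F A)).prod = 0 := by
  have hop : (φ : Module.End F A) * ((List.ofFn x).map (LinearMap.mul F A)).prod =
      ∑ i : Fin m, ((List.ofFn (Function.update x i (φ (x i)))).map (LinearMap.mul F A)).prod
        + ((List.ofFn x).map (LinearMap.mul F A)).prod * (φ : Module.End F A) := by
    ext y
    have := hφ (Fin.snoc x y : Fin (m + 1) → A)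
    rw [Fin.sum_univ_castSucc] at this
    simp only [Fin.snoc_castSucc, Fin.snoc_last, ← Fin.snoc_update, Fin.update_snoc_last,
      aux_snoc (F := F)] at this
    simpa using this
  have h2 := congrArg (LinearMap.trace F A) hop
  rw [map_add, LinearMap.trace_mul_comm F φ, map_sum] at h2
  exact right_eq_add.1 h2 

theorem aux_set {A : Type*} {n : ℕ} (x : Fin n → A) (i : Fin n) (z : A) :
    List.ofFn (Function.update x i z) = (List.ofFn x).set i z := by
  apply List.ext_getElem
  · simp
  · intro j h1 h2
    simp only [List.getElem_ofFn, List.getElem_set, Function.update_apply, Fin.ext_iff]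
    simp only [eq_comm]

theorem aux_unit {F A : Type*} [Field F]
    [NonUnitalRing A] [Module F A] (J : Submodule F A) (u : A)
    (hr : ∀ a, a * u - a ∈ J) (hl : ∀ a, u * a - a ∈ J) (hJ : ∀ a ∈ J, ∀ b, a * b ∈ J)
    {n : ℕ} (i : Fin n) (z : A) :
    lnProd (List.ofFn (Function.update (fun _ : Fin n => u) i z)) - z ∈ J := by
  have hf : ∀ (k : ℕ) (a : A), (List.replicate k u).foldl (· * ·) a - a ∈ J := by
    intro k
    induction k with
    | zero => intro a; simp
    | succ k ih =>
      intro a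
      rw [List.replicate_succ, List.foldl_cons]
      have := J.add_mem (ih (a * u)) (hr a)
      simpa using this
  have hi := i.2
  rw [aux_set, List.ofFn_const, List.set_eq_take_append_cons_drop, if_pos (by simp)]
  rw [List.take_replicate, List.drop_replicate, min_eq_left hi.le]
  generalize (i : ℕ) = j
  cases j with
  | zero => exact hf _ z
  | succ j =>
    rw [List.replicate_succ, List.cons_append]
    change List.foldl (· * ·) u (List.replicate j u ++ z :: _) - z ∈ J
    rw [List.foldl_append, List.foldl_cons]
    set w := List.foldl (· * ·) u (List.replicate j u) with hw
    have h1 : w - u ∈ J := hf j u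
    have h2 := hJ _ h1 z
    have h3 := J.add_mem (J.add_mem (hf (n - (j + 1 + 1)) (w * z)) h2) (hl z)
    rw [sub_mul] at h3
    simpa using h3

theorem aux_main {F A : Type*} [Field F] [CharZero F]
    [NonUnitalRing A] [Module F A] [SMulCommClass F A A] [IsScalarTower F A A]
    [FiniteDimensional F A] {m : ℕ} (φ : A →ₗ[F] A) (hb : Function.Bijective φ)
    (hφ : IsLeibnizDer (m + 1 + 1) φ) (a : A) : IsNilpotent (LinearMap.mul F A a) := by
  let τ : A →ₗ[F] F := LinearMap.trace F A ∘ₗ LinearMap.mul F A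
  have hL : ∀ a b : A, LinearMap.mul F A (a * b) = LinearMap.mul F A a * LinearMap.mul F A b := by
    intro a b; ext c; simp [mul_assoc]
  have hτ : ∀ a, τ a = LinearMap.trace F A (LinearMap.mul F A a) := fun _ => rfl
  have hcomm : ∀ a b, τ (a * b) = τ (b * a) := by
    intro a b
    rw [hτ, hτ, hL, hL, LinearMap.trace_mul_comm]
  let B : A →ₗ[F] Module.Dual F A := (LinearMap.mul F A).compr₂ τ
  have hB : ∀ a b, B a b = τ (a * b) := fun _ _ => rfl
  let J : Submodule F A := LinearMap.ker B
  have hJmem : ∀ a, a ∈ J ↔ ∀ b, τ (a * b) = 0 := by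
    intro a
    rw [LinearMap.mem_ker, LinearMap.ext_iff]
    rfl
  have hJr : ∀ a ∈ J, ∀ b, a * b ∈ J := by
    intro a ha b
    rw [hJmem] at ha ⊢
    intro c
    rw [mul_assoc]; exact ha _
  -- (L b) * (L c)^j is in the range of L
  have hrange : ∀ (b c : A) (j : ℕ), ∃ d, LinearMap.mul F A d =
      LinearMap.mul F A b * LinearMap.mul F A c ^ j := by
    intro b c j
    induction j with
    | zero => exact ⟨b, by simp⟩
    | succ j ih =>
      obtain ⟨d, hd⟩ := ih
      exact ⟨d * c, by rw [hL, hd, pow_succ, mul_assoc]⟩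
  have hJnil : ∀ a ∈ J, IsNilpotent (LinearMap.mul F A a) := by
    intro a ha
    refine aux_trace _ 2 ?_
    intro k hk
    obtain ⟨j, rfl⟩ := Nat.exists_eq_add_of_le hk
    obtain ⟨d, hd⟩ := hrange a a j
    rw [show 2 + j = (j + 1) + 1 by ring, pow_succ', pow_succ', ← hd, ← hL]
    exact (hJmem a).1 ha d
  have hτnil : ∀ a, IsNilpotent (LinearMap.mul F A a) → τ a = 0 := by
    intro a ha
    exact (LinearMap.isNilpotent_trace_of_isNilpotent ha).eq_zero
  -- invariance
  have hinv : ∀ a ∈ J, φ a ∈ J := by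
    intro a ha
    have h1 : ∀ y : Fin m → A, LinearMap.trace F A (LinearMap.mul F A (φ a) *
        ((List.ofFn y).map (LinearMap.mul F A)).prod) = 0 := by
      intro y
      have := aux_tr_id φ hφ (Fin.cons a y : Fin (m + 1) → A)
      rw [Fin.sum_univ_succ] at this
      simp only [Fin.cons_zero, Fin.cons_succ, ← Fin.cons_update, Fin.update_cons_zero,
        List.ofFn_cons, List.map_cons, List.prod_cons] at this
      rw [Finset.sum_eq_zero, add_zero] at this
      · exact this
      intro i _
      have hne : ∀ l : List A, l ≠ [] → ∃ d, LinearMap.mul F A d =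
          (l.map (LinearMap.mul F A)).prod := by
        intro l
        induction l with
        | nil => simp
        | cons b l ih =>
          intro _
          by_cases hl : l = []
          · exact ⟨b, by simp [hl]⟩
          · obtain ⟨d, hd⟩ := ih hl
            exact ⟨b * d, by rw [hL, hd]; simp⟩
      obtain ⟨d, hd⟩ := hne (List.ofFn (Function.update y i (φ (y i)))) (by
        intro h0
        have := congrArg List.length h0
        simp at this
        have := i.2
        omega)
      rw [← hd, ← hL]
      exact (hJmem a).1 ha d
    rw [hJmem]
    intro b
    cases m with
    | zero =>
      obtain ⟨c, hc⟩ := hb.2 (φ a * b)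
      have := aux_tr_id φ hφ (fun _ => c)
      rw [← hc, hτ]
      simpa using this
    | succ m =>
      apply hτnil
      refine aux_trace _ (m + 1) ?_
      intro k hk
      obtain ⟨j, rfl⟩ := Nat.exists_eq_add_of_le hk
      obtain ⟨d, hd⟩ := hrange b (φ a * b) j
      have := h1 (Fin.cons d (fun _ => φ a * b))
      rw [List.ofFn_cons, List.ofFn_const] at this
      simp only [List.map_cons, List.prod_cons, List.map_replicate, List.prod_replicate] at this
      rw [hd, ← mul_assoc, ← mul_assoc, ← hL, mul_assoc, ← pow_add, ← pow_succ'] at this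
      rw [← this]
      congr 2
      omega
  -- a unit modulo J
  have hu : ∃ u, ∀ b, τ (b * u) = τ b := by
    have h1 : τ ∈ (LinearMap.ker B).dualAnnihilator := by
      rw [Submodule.mem_dualAnnihilator]
      exact fun w hw => hτnil w (hJnil w hw)
    rw [← LinearMap.range_dualMap_eq_dualAnnihilator_ker] at h1
    obtain ⟨g, hg⟩ := h1
    obtain ⟨u, rfl⟩ := (Module.evalEquiv F A).surjective g
    refine ⟨u, fun b => ?_⟩
    exact LinearMap.congr_fun hg b
  obtain ⟨u, hu⟩ := hu
  have hl : ∀ a, u * a - a ∈ J := by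
    intro a
    rw [hJmem]
    intro b
    rw [sub_mul, map_sub, mul_assoc, hcomm, hu, sub_self]
  have hr : ∀ a, a * u - a ∈ J := by
    intro a
    rw [hJmem]
    intro b
    rw [sub_mul, map_sub, hcomm (a * u) b, ← mul_assoc, hu, hcomm b a, sub_self]
  have hφu : φ u ∈ J := by
    have h1 := hφ (fun _ => u)
    have h2 : lnProd (List.ofFn (fun _ : Fin (m + 1 + 1) => u)) - u ∈ J := by
      have := aux_unit J u hr hl hJr (0 : Fin (m + 1 + 1)) u
      rwa [Function.update_eq_self_iff.2 rfl] at this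
    have h3 := hinv _ h2
    rw [map_sub, h1] at h3
    have h4 : ∑ i : Fin (m + 1 + 1), (lnProd (List.ofFn
        (Function.update (fun _ : Fin (m + 1 + 1) => u) i (φ u))) - φ u) ∈ J :=
      J.sum_mem fun i _ => aux_unit J u hr hl hJr i (φ u)
    rw [Finset.sum_sub_distrib] at h4
    have h5 := J.sub_mem h3 h4
    have h6 : ((m : F) + 1) • φ u ∈ J := by
      convert h5 using 1
      simp only [Finset.sum_const, Finset.card_univ, Fintype.card_fin]
      rw [← Nat.cast_smul_eq_nsmul F]
      push_cast
      module
    exact (J.smul_mem_iff (by exact_mod_cast Nat.succ_ne_zero m)).1 h6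
  have huJ : u ∈ J := by
    let e := LinearEquiv.ofBijective φ hb
    have h1 : J.map (e : A →ₗ[F] A) = J := by
      apply Submodule.eq_of_le_of_finrank_eq
      · rintro _ ⟨a, ha, rfl⟩
        exact hinv a ha
      · exact LinearEquiv.finrank_map_eq e J
    rw [← h1] at hφu
    obtain ⟨v, hv, hvu⟩ := hφu
    have : v = u := hb.1 hvu
    exact this ▸ hv
  apply hJnil
  have := J.sub_mem (hJr u huJ a) (hl a)
  simpa using this

/-- A finite-dimensional associative algebra over a field of characteristic zero is
nilpotent iff it admits an invertible Leibniz-derivation of some order `n ≥ 2`. -/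
theorem associative_nilpotent_iff_invertible_leibniz_derivation
    {F A : Type*} [Field F] [CharZero F]
    [NonUnitalRing A] [Module F A] [SMulCommClass F A A] [IsScalarTower F A A]
    [FiniteDimensional F A] :
    (∃ n : ℕ, 1 ≤ n ∧ ∀ x : Fin n → A, lnProd (List.ofFn x) = 0) ↔
      (∃ n : ℕ, 2 ≤ n ∧ ∃ φ : A →ₗ[F] A, Function.Bijective φ ∧ IsLeibnizDer n φ) := by
  constructor
  · rintro ⟨n, hn, h⟩
    have h2 : ∀ x : Fin (n + 1) → A, lnProd (List.ofFn x) = 0 := by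
      intro x
      obtain ⟨k, rfl⟩ : ∃ k, n = k + 1 := ⟨n - 1, by omega⟩
      have h1 := h (Fin.init x)
      have : lnProd (List.ofFn x) = lnProd (List.ofFn (Fin.init x)) * x (Fin.last _) := by
        rw [List.ofFn_succ' x, List.concat_eq_append]
        simp only [List.ofFn_succ, List.cons_append]
        simp [lnProd, Fin.init]
      rw [this, h1, zero_mul]
    refine ⟨n + 1, by omega, LinearMap.id, Function.bijective_id, ?_⟩
    intro x
    simp only [h2, map_zero, Finset.sum_const_zero]
  · rintro ⟨n, hn, φ, hb, hφ⟩
    obtain ⟨m, rfl⟩ : ∃ m, n = m + 1 + 1 := ⟨n - 2, by omega⟩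
    obtain ⟨k, hk⟩ := aux_nil (F := F) (A := A) (aux_main φ hb hφ)
    refine ⟨k + 1, by omega, fun x => ?_⟩
    rw [← Fin.snoc_init_self x, aux_snoc (F := F)]
    exact hk _ (by simp) _
end

section
/- Let J be a finite-dimensional Jordan algebra over a field of characteristic zero admitting an invertible (bijective) derivation. Then J is nilpotent. -/
theorem lin_jordan {F J : Type*} [Field F] [CharZero F]
    [NonUnitalNonAssocRing J] [Module F J]
    (comm : ∀ x y : J, x * y = y * x)
    (jordan : ∀ x y : J, ((x * x) * y) * x = (x * x) * (y * x)) (x y z w : J) :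
    (x*y)*(z*w)+(y*z)*(x*w)+(z*x)*(y*w) = ((x*y)*w)*z+((y*z)*w)*x+((z*x)*w)*y := by
  have h1 := jordan (x+y+z) w
  have h2 := jordan (x+y) w
  have h3 := jordan (y+z) w
  have h4 := jordan (x+z) w
  have h5 := jordan x w
  have h6 := jordan y w
  have h7 := jordan z w
  simp only [mul_add, add_mul, comm y x, comm z y, comm z x, comm w] at *
  have : (2:F) • ((x*y)*(z*w)+(y*z)*(x*w)+(x*z)*(y*w)) = (2:F) • (((x*y)*w)*z+((y*z)*w)*x+((x*z)*w)*y) := by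
    linear_combination (norm := module) (-1:F) • h1 + (1:F) • h2 + (1:F) • h3 + (1:F) • h4 - (1:F) • h5 - (1:F) • h6 - (1:F) • h7
  have this := smul_right_injective J (two_ne_zero (α := F)) this
  exact this

theorem mat_nil_of_trace {ι K : Type*} [Fintype ι] [DecidableEq ι] [Field K] [CharZero K]
    (C : Matrix ι ι K) (h : ∀ n, (C^(n+1)).trace = 0) : IsNilpotent C := by
  open Polynomial in
  obtain ⟨g, hg, hX⟩ := Polynomial.exists_eq_pow_rootMultiplicity_mul_and_not_dvd C.charpoly (C.charpoly_monic.ne_zero) 0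
  rw [C_0, sub_zero] at hg hX
  set k := rootMultiplicity 0 C.charpoly
  have hc : IsCoprime ((X:K[X])^(k+1)) g :=
    ((irreducible_X.coprime_iff_not_dvd).2 hX).pow_left
  obtain ⟨a, b, hab⟩ := hc
  have hp : aeval C (X^k * g) = 0 := by rw [← hg]; exact C.aeval_self_charpoly
  have tr0 : ∀ q : K[X], (aeval C (q * X)).trace = 0 := by
    intro q
    induction q using Polynomial.induction_on' with
    | add p q hp hq => rw [add_mul, map_add, Matrix.trace_add, hp, hq, add_zero]
    | monomial n r =>
      rw [← C_mul_X_pow_eq_monomial, mul_assoc, ← pow_succ, map_mul, aeval_C, map_pow, aeval_X, ← Algebra.smul_def, Matrix.trace_smul, h, smul_zero]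
  have he : aeval C (a * X^(k+1)) = 0 := by
    have hid : IsIdempotentElem (aeval C (a * X^(k+1))) := by
      unfold IsIdempotentElem
      rw [← map_mul, ← sub_eq_zero, ← map_sub]
      have : a * X^(k+1) * (a * X^(k+1)) - a * X^(k+1) = - (a * b * X) * (X^k * g) := by
        linear_combination (a * X^(k+1)) * hab
      rw [this, map_mul, hp, mul_zero]
    have h2 : IsIdempotentElem (Matrix.toLin' (aeval C (a * X^(k+1)))) := by
      unfold IsIdempotentElem
      rw [Module.End.mul_eq_comp, ← Matrix.toLin'_mul, hid.eq]
    have h3 := (LinearMap.IsIdempotentElem.trace_eq_zero_iff h2).1 (by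
      rw [Matrix.trace_toLin'_eq, pow_succ, ← mul_assoc]; exact tr0 _)
    exact (LinearEquiv.map_eq_zero_iff _).1 h3
  refine ⟨k, ?_⟩
  have h1 : aeval C (X^k : K[X]) = 0 := by
    have : (X^k : K[X]) = X^k * (a * X^(k+1)) + b * (X^k * g) := by
      linear_combination - X^k * hab
    rw [this, map_add, map_mul, he, map_mul, hp]; simp
  simpa using h1

theorem mat_nil {ι K : Type*} [Fintype ι] [DecidableEq ι] [Field K] [CharZero K]
    (A B : Matrix ι ι K) (hAB : A * B = B * A) (P : ℕ → Matrix ι ι K) (P0 : P 0 = 1) (P1 : P 1 = A)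
    (hP : ∀ n, P (n+2) = 2 * A * P (n+1) + (B - 2 * A * A) * P n)
    (h : ∀ n, (P (n+1)).trace = 0) : IsNilpotent A := by
  set E := B - 2 * A * A with hE
  have hAE : A * E = E * A := by
    simp only [hE, mul_sub, sub_mul, hAB, two_mul, add_mul, mul_add, mul_assoc]
  set C : Matrix (ι ⊕ ι) (ι ⊕ ι) K := Matrix.fromBlocks (2*A) 1 E 0 with hC
  have hCC : C * C = Matrix.fromBlocks (2*A) 0 0 (2*A) * C + Matrix.fromBlocks E 0 0 E := by
    simp [hC, Matrix.fromBlocks_multiply, Matrix.fromBlocks_add, mul_assoc, ← hAE, two_mul, mul_add, add_mul]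
  have key : ∀ n, (C^n).toBlocks₁₁ + (C^n).toBlocks₂₂ = 2 * P n := by
    intro n
    induction n using Nat.twoStepInduction with
    | zero =>
      rw [pow_zero, ← Matrix.fromBlocks_one, P0, Matrix.toBlocks_fromBlocks₁₁, Matrix.toBlocks_fromBlocks₂₂, mul_one]; exact one_add_one_eq_two (R := Matrix ι ι K)
    | one => simp [hC, P1]
    | more n h0 h1 =>
      have h2 : C^(n+2) = Matrix.fromBlocks (2*A) 0 0 (2*A) * C^(n+1) + Matrix.fromBlocks E 0 0 E * C^n := by
        rw [pow_succ', pow_succ', ← mul_assoc, hCC, add_mul, mul_assoc]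
      rw [hP, h2]
      rw [← Matrix.fromBlocks_toBlocks (C^(n+1)), ← Matrix.fromBlocks_toBlocks (C^n)]
      simp only [Matrix.fromBlocks_multiply, Matrix.fromBlocks_add, Matrix.toBlocks_fromBlocks₁₁, Matrix.toBlocks_fromBlocks₂₂, zero_mul, add_zero, zero_add]
      have e : 2 * (2 * A * P (n+1) + E * P n) = 2 * A * (2 * P (n+1)) + E * (2 * P n) := by
        noncomm_ring
      rw [e, ← h0, ← h1]; noncomm_ring
  have hCn : IsNilpotent C := by
    apply mat_nil_of_trace
    intro n
    have ht : (C^(n+1)).trace = ((C^(n+1)).toBlocks₁₁).trace + ((C^(n+1)).toBlocks₂₂).trace := by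
      simp [Matrix.trace, Fintype.sum_sum_type, Matrix.toBlocks₁₁, Matrix.toBlocks₂₂]
    rw [ht, ← Matrix.trace_add, key, two_mul, Matrix.trace_add, h, add_zero]
  set W : Matrix (ι ⊕ ι) (ι ⊕ ι) K := Matrix.fromBlocks (-1) 0 (2*A) 1 with hW
  have hWW : W * W = 1 := by
    rw [← Matrix.fromBlocks_one]
    simp [hW, Matrix.fromBlocks_multiply]
  have hC' : W * C * W = Matrix.fromBlocks (2*A) 0 0 (2*A) - C := by
    have : Matrix.fromBlocks (2*A) 0 0 (2*A) - C = Matrix.fromBlocks 0 (-1) (-E) (2*A) := by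
      rw [sub_eq_iff_eq_add]; simp [hC, Matrix.fromBlocks_add]
    rw [this]
    simp [hW, hC, Matrix.fromBlocks_multiply]
  have hpow : ∀ n, (W * C * W)^n = W * C^n * W := by
    intro n
    induction n with
    | zero => simp [hWW]
    | succ n ih =>
      rw [pow_succ, ih, pow_succ]
      calc W * C^n * W * (W * C * W) = W * C^n * (W * W) * C * W := by noncomm_ring
        _ = _ := by rw [hWW]; noncomm_ring
  have hCn' : IsNilpotent (Matrix.fromBlocks (2*A) 0 0 (2*A) - C) := by
    obtain ⟨m, hm⟩ := hCn
    exact ⟨m, by rw [← hC', hpow, hm]; simp⟩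
  have hcom : Commute C (Matrix.fromBlocks (2*A) 0 0 (2*A) - C) := by
    apply Commute.sub_right _ (Commute.refl _)
    unfold Commute SemiconjBy
    simp [hC, Matrix.fromBlocks_multiply, mul_assoc, ← hAE, two_mul, mul_add, add_mul]
  have h2 := hcom.isNilpotent_add hCn hCn'
  rw [add_sub_cancel] at h2
  obtain ⟨m, hm⟩ := h2
  have hdiag : ∀ m, (Matrix.fromBlocks (2*A) 0 0 (2*A) : Matrix (ι ⊕ ι) (ι ⊕ ι) K)^m = Matrix.fromBlocks ((2*A)^m) 0 0 ((2*A)^m) := by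
    intro m
    induction m with
    | zero => simp
    | succ m ih => rw [pow_succ, ih, Matrix.fromBlocks_multiply]; simp [pow_succ]
  rw [hdiag, ← Matrix.fromBlocks_zero, Matrix.fromBlocks_inj] at hm
  have h3 := hm.1
  have h4 : (2 * A) = (2:K) • A := by rw [two_mul, two_smul]
  rw [h4, smul_pow] at h3
  exact ⟨m, (smul_eq_zero.1 h3).resolve_left (pow_ne_zero _ two_ne_zero)⟩

theorem genEig_mul {K J : Type*} [Field K]
    [NonUnitalNonAssocRing J] [Module K J] [SMulCommClass K J J] [IsScalarTower K J J]
    (D : Module.End K J) (hD : ∀ x y, D (x * y) = D x * y + x * D y) (a b : K) :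
    ∀ (N m n : ℕ), m + n ≤ N → ∀ (x y : J), ((D - algebraMap K _ a)^m) x = 0 →
      ((D - algebraMap K _ b)^n) y = 0 → ((D - algebraMap K _ (a+b))^(m+n)) (x*y) = 0 := by
  intro N
  induction N with
  | zero =>
    intro m n hmn x y hx hy
    obtain ⟨rfl, rfl⟩ : m = 0 ∧ n = 0 := by omega
    simp at hx; simp [hx]
  | succ N ih =>
    intro m n hmn x y hx hy
    rcases m with _ | m
    · have hx0 : x = 0 := by simpa using hx
      simp [hx0]
    rcases n with _ | n
    · have hx0 : y = 0 := by simpa using hy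
      simp [hx0]
    have e : (D - algebraMap K _ (a+b)) (x*y) = ((D - algebraMap K _ a) x) * y + x * ((D - algebraMap K _ b) y) := by
      simp [hD, sub_mul, mul_sub, add_smul, Module.algebraMap_end_apply, smul_mul_assoc, mul_smul_comm]
      abel
    have h1 := ih m (n+1) (by omega) ((D - algebraMap K _ a) x) y (by rw [pow_succ] at hx; exact hx) hy
    have h2 := ih (m+1) n (by omega) x ((D - algebraMap K _ b) y) hx (by rw [pow_succ] at hy; exact hy)
    have : m + 1 + (n + 1) = (m + n + 1) + 1 := by ring
    rw [this, pow_succ, Module.End.mul_apply, e, map_add]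
    rw [show m + (n+1) = m+n+1 by ring] at h1
    rw [show m + 1 + n = m+n+1 by ring] at h2
    rw [h1, h2, add_zero]

theorem maxGen_mul {K J : Type*} [Field K]
    [NonUnitalNonAssocRing J] [Module K J] [SMulCommClass K J J] [IsScalarTower K J J]
    (D : Module.End K J) (hD : ∀ x y, D (x * y) = D x * y + x * D y) (a b : K) (x y : J)
    (hx : x ∈ D.maxGenEigenspace a) (hy : y ∈ D.maxGenEigenspace b) :
    x * y ∈ D.maxGenEigenspace (a+b) := by
  rw [Module.End.mem_maxGenEigenspace] at *
  obtain ⟨m, hm⟩ := hx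
  obtain ⟨n, hn⟩ := hy
  refine ⟨m+n, ?_⟩
  have := genEig_mul D hD a b (m+n) m n le_rfl x y
  simp only [Module.algebraMap_end_eq_smul_id] at this
  exact this hm hn

open Module in
theorem der_nil {K J : Type*} [Field K] [CharZero K] [IsAlgClosed K]
    [NonUnitalNonAssocRing J] [Module K J] [SMulCommClass K J J] [IsScalarTower K J J]
    [FiniteDimensional K J]
    (D : Module.End K J) (hD : ∀ x y, D (x * y) = D x * y + x * D y)
    (h : ∀ Y : Module.End K J, (∀ x y, Y (x * y) = Y x * y + x * Y y) →
      LinearMap.trace K J (D * Y) = 0) : IsNilpotent D := by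
  classical
  have hint : DirectSum.IsInternal (fun a : K => D.maxGenEigenspace a) :=
    DirectSum.isInternal_submodule_of_iSupIndep_of_iSup_eq_top
      D.independent_maxGenEigenspace (Module.End.iSup_maxGenEigenspace_eq_top D)
  have htop := Module.End.iSup_maxGenEigenspace_eq_top D
  have hfin : {a | D.maxGenEigenspace a ≠ ⊥}.Finite :=
    WellFoundedGT.finite_ne_bot_of_iSupIndep D.independent_maxGenEigenspace
  have hbot : ∀ a, a ≠ 0 → D.maxGenEigenspace a = ⊥ := by
    intro a ha
    by_contra hne
    obtain ⟨φ, hφ⟩ : ∃ φ : Module.Dual ℚ K, φ a ≠ 0 := by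
      by_contra! hc
      exact ha ((Module.forall_dual_apply_eq_zero_iff ℚ a).1 hc)
    let e := LinearEquiv.ofBijective (DirectSum.coeLinearMap (fun a : K => D.maxGenEigenspace a)) hint
    let Y : Module.End K J := (DirectSum.toModule K K J
      (fun c => (algebraMap ℚ K (φ c)) • (D.maxGenEigenspace c).subtype)) ∘ₗ e.symm.toLinearMap
    have hY : ∀ c, ∀ x ∈ D.maxGenEigenspace c, Y x = (algebraMap ℚ K (φ c)) • x := by
      intro c x hx
      have : e.symm x = DirectSum.lof K K (fun a : K => D.maxGenEigenspace a) c ⟨x, hx⟩ := by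
        rw [LinearEquiv.symm_apply_eq]
        exact (DirectSum.coeLinearMap_lof (fun a : K => D.maxGenEigenspace a) c ⟨x, hx⟩).symm
      simp [Y, this]
    have hYder : ∀ x y, Y (x * y) = Y x * y + x * Y y := by
      intro x y
      have hx : x ∈ ⨆ a, D.maxGenEigenspace a := by rw [htop]; trivial
      have hy : y ∈ ⨆ a, D.maxGenEigenspace a := by rw [htop]; trivial
      induction hx using Submodule.iSup_induction' with
      | zero => simp
      | add x1 x2 _ _ h1 h2 => rw [add_mul, map_add, h1, h2, map_add, add_mul, add_mul]; abel
      | mem c x hx =>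
        induction hy using Submodule.iSup_induction' with
        | zero => simp
        | add x1 x2 _ _ h1 h2 => rw [mul_add, map_add, h1, h2, map_add, mul_add, mul_add]; abel
        | mem c' y hy =>
          rw [hY _ _ (maxGen_mul D hD _ _ _ _ hx hy), hY _ _ hx, hY _ _ hy, map_add, map_add,
            add_smul, smul_mul_assoc, mul_smul_comm]
    have ht := h Y hYder
    have hmap : ∀ c, Set.MapsTo (D * Y) (D.maxGenEigenspace c) (D.maxGenEigenspace c) := by
      intro c x hx
      show D (Y x) ∈ _
      rw [hY c x hx, map_smul]
      exact Submodule.smul_mem _ _ (D.mapsTo_maxGenEigenspace_of_comm (Commute.refl D) c hx)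
    rw [LinearMap.trace_eq_sum_trace_restrict' hint hfin hmap] at ht
    have hc : ∀ c, LinearMap.trace K (D.maxGenEigenspace c) ((D * Y).restrict (hmap c)) =
        algebraMap ℚ K (φ c) * (c * (finrank K (D.maxGenEigenspace c) : K)) := by
      intro c
      have hm := D.mapsTo_maxGenEigenspace_of_comm (Commute.refl D) c
      have h1 : (D * Y).restrict (hmap c) = (algebraMap ℚ K (φ c)) • (D.restrict hm) := by
        ext x
        change D (Y x) = (algebraMap ℚ K (φ c)) • D x
        rw [hY c x x.2, map_smul]
      have h2 : LinearMap.trace K _ (D.restrict hm) = c * (finrank K (D.maxGenEigenspace c) : K) := by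
        have hn := Module.End.isNilpotent_restrict_maxGenEigenspace_sub_algebraMap D c
        have h3 := (LinearMap.isNilpotent_trace_of_isNilpotent hn).eq_zero
        have h4 : D.restrict hm = (D - algebraMap K (End K J) c).restrict
          (Module.End.mapsTo_maxGenEigenspace_of_comm (Algebra.mul_sub_algebraMap_commutes D c) c) + c • 1 := by
          ext x
          change D x = (D x - (algebraMap K (End K J) c) x) + c • (x : J)
          rw [Module.algebraMap_end_apply, sub_add_cancel]
        rw [h4, map_add, h3, map_smul, LinearMap.trace_one]; simp
      rw [h1, map_smul, h2, smul_eq_mul]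
    simp_rw [hc] at ht
    have ht2 := congrArg φ ht
    rw [map_sum, map_zero] at ht2
    have h5 : ∀ c, φ (algebraMap ℚ K (φ c) * (c * (finrank K (D.maxGenEigenspace c) : K))) =
        (finrank K (D.maxGenEigenspace c) : ℚ) * (φ c * φ c) := by
      intro c
      have : algebraMap ℚ K (φ c) * (c * (finrank K (D.maxGenEigenspace c) : K)) =
        ((finrank K (D.maxGenEigenspace c) : ℚ) * φ c) • c := by
        rw [Algebra.smul_def, map_mul, map_natCast]; ring
      rw [this, map_smul, smul_eq_mul]; ring
    simp_rw [h5] at ht2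
    rw [Finset.sum_eq_zero_iff_of_nonneg (fun c _ => mul_nonneg (Nat.cast_nonneg _) (mul_self_nonneg _))] at ht2
    have h6 := ht2 a (by simpa using hne)
    rcases mul_eq_zero.1 h6 with h7 | h7
    · have : finrank K (D.maxGenEigenspace a) = 0 := by exact_mod_cast h7
      exact hne (Submodule.finrank_eq_zero.1 this)
    · exact hφ (mul_self_eq_zero.1 h7)
  have h0 : D.maxGenEigenspace 0 = ⊤ := by
    rw [eq_top_iff, ← htop]
    refine iSup_le fun c => ?_
    by_cases hc : c = 0
    · rw [hc]
    · rw [hbot c hc]; exact bot_le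
  rw [Module.End.maxGenEigenspace_eq_genEigenspace_finrank] at h0
  refine ⟨finrank K J, ?_⟩
  ext x
  have hx : x ∈ D.genEigenspace 0 (finrank K J : ℕ) := by rw [h0]; trivial
  rw [Module.End.mem_genEigenspace_nat] at hx
  simpa using hx

theorem ext_nil {K A : Type*} [Field K] [Ring A] [Algebra K A] (S : Submodule K A) (Y : A) (m k : ℕ)
    (hm : Y^m = 0) (hk : S^k = ⊥) (h : ∀ s ∈ S, Y * s - s * Y ∈ S) :
    ∃ N, (S ⊔ Submodule.span K {Y})^N = ⊥ := by
  set T := S ⊔ Submodule.span K {Y} with hT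
  set U : Submodule K A := ⨆ i : ℕ, T^i with hU
  have hTi : ∀ i : ℕ, T^i ≤ U := fun i => le_iSup (fun i : ℕ => T^i) i
  have hTU : T * U ≤ U := by
    rw [hU, Submodule.mul_iSup]
    refine iSup_le fun i => ?_
    rw [← pow_succ']; exact hTi _
  have hUT : U * T = T * U := by
    rw [hU, Submodule.mul_iSup, Submodule.iSup_mul]
    simp_rw [← pow_succ, ← pow_succ']
  have hUTn : ∀ n : ℕ, U * T^n = T^n * U := by
    intro n
    induction n with
    | zero => simp
    | succ n ih => rw [pow_succ, ← mul_assoc, ih, mul_assoc, hUT, mul_assoc]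
  have hUU : U * U ≤ U := by
    conv_lhs => rw [hU, Submodule.mul_iSup]
    refine iSup_le fun i => ?_
    rw [Submodule.iSup_mul]
    refine iSup_le fun j => ?_
    rw [← pow_add]; exact hTi _
  have hST : S ≤ T := le_sup_left
  have hYT : Submodule.span K {Y} ≤ T := le_sup_right
  have hSU : S * U ≤ U := (mul_le_mul' hST le_rfl).trans hTU
  have hYS : Submodule.span K {Y} * S ≤ S * T ⊔ S := by
    rw [Submodule.mul_le]
    intro y hy s hs
    obtain ⟨c, rfl⟩ := Submodule.mem_span_singleton.1 hy
    rw [smul_mul_assoc]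
    refine Submodule.smul_mem _ _ ?_
    rw [← sub_add_cancel (Y * s) (s * Y), add_comm]
    exact Submodule.add_mem_sup (Submodule.mul_mem_mul hs (hYT (Submodule.mem_span_singleton_self Y))) (h s hs)
  have claim : ∀ i : ℕ, T^i ≤ S * U ⊔ Submodule.span K {Y^i} := by
    intro i
    induction i with
    | zero => simp [Submodule.one_eq_span]
    | succ i ih =>
      rw [pow_succ']
      refine (mul_le_mul' le_rfl ih).trans ?_
      rw [hT, Submodule.sup_mul, Submodule.mul_sup (Submodule.span K {Y})]
      refine sup_le ?_ (sup_le ?_ ?_)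
      · refine le_sup_of_le_left (mul_le_mul' le_rfl (sup_le hSU ?_))
        refine le_trans ?_ (hTi i)
        rw [Submodule.span_le, Set.singleton_subset_iff]
        exact Submodule.pow_mem_pow _ (hYT (Submodule.mem_span_singleton_self Y)) i
      · refine le_sup_of_le_left ?_
        rw [← mul_assoc]
        refine (mul_le_mul' hYS le_rfl).trans ?_
        rw [Submodule.sup_mul, mul_assoc]
        exact sup_le (mul_le_mul' le_rfl hTU) le_rfl
      · refine le_sup_of_le_right ?_
        rw [Submodule.span_mul_span, Set.singleton_mul_singleton, pow_succ']
  have hTm : T^m ≤ S * U := by simpa [hm] using claim m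
  have fin : ∀ n : ℕ, T^(m*n) ≤ S^n * U := by
    intro n
    induction n with
    | zero => simpa using hTi 0
    | succ n ih =>
      rw [mul_add, mul_one, pow_add, pow_succ, mul_assoc]
      calc T^(m*n) * T^m ≤ S^n * U * T^m := mul_le_mul' ih le_rfl
        _ = S^n * (T^m * U) := by rw [mul_assoc, hUTn]
        _ ≤ S^n * (S * U * U) := mul_le_mul' le_rfl (mul_le_mul' hTm le_rfl)
        _ ≤ S^n * (S * U) := by rw [mul_assoc]; exact mul_le_mul' le_rfl (mul_le_mul' le_rfl hUU)
  refine ⟨m*k, ?_⟩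
  have := fin k
  rw [hk, Submodule.bot_mul] at this
  exact le_bot_iff.1 this

theorem exists_push {K V : Type*} [Field K] [AddCommGroup V] [Module K V]
    (S : Submodule K (Module.End K V)) (k : ℕ) (hk : S^k = ⊥) (B : Submodule K V) (hB : B ≠ ⊤) :
    ∃ y, y ∉ B ∧ ∀ s ∈ S, s y ∈ B := by
  by_contra! hc
  obtain ⟨y, hy⟩ : ∃ y, y ∉ B := by
    by_contra! h
    exact hB (eq_top_iff.2 fun x _ => h x)
  have : ∀ n : ℕ, ∃ T ∈ S^n, T y ∉ B := by
    intro n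
    induction n with
    | zero => exact ⟨1, by rw [pow_zero]; exact Submodule.one_le.1 le_rfl, by simpa using hy⟩
    | succ n ih =>
      obtain ⟨T, hT, hTy⟩ := ih
      obtain ⟨s, hs, hsy⟩ := hc _ hTy
      exact ⟨s * T, by rw [pow_succ']; exact Submodule.mul_mem_mul hs hT, hsy⟩
  obtain ⟨T, hT, hTy⟩ := this k
  rw [hk, Submodule.mem_bot] at hT
  simp [hT] at hTy

section eng
attribute [local instance 100] LieRing.ofAssociativeRing
attribute [local instance] LieAlgebra.ofAssociativeAlgebra

theorem engel_sub {K V : Type*} [Field K] [AddCommGroup V] [Module K V] [FiniteDimensional K V]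
    (S : Submodule K (Module.End K V)) (hS : ∀ a ∈ S, ∀ b ∈ S, a * b - b * a ∈ S)
    (hn : ∀ a ∈ S, IsNilpotent a) : ∃ k, S^k = ⊥ := by
  let L : LieSubalgebra K (Module.End K V) := { S with lie_mem' := fun {a b} ha hb => hS a ha b hb }
  have hL : LieModule.IsNilpotent L V := by
    rw [LieModule.isNilpotent_iff_forall' (R := K)]
    intro x
    exact hn x x.2
  obtain ⟨k, hk⟩ := LieModule.IsNilpotent.nilpotent K L V
  refine ⟨k, ?_⟩
  have : ∀ n : ℕ, ∀ T ∈ S^n, ∀ v, T v ∈ LieModule.lowerCentralSeries K L V n := by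
    intro n
    induction n with
    | zero => intro T _ v; simp
    | succ n ih =>
      intro T hT v
      rw [pow_succ'] at hT
      induction hT using Submodule.mul_induction_on' with
      | mem_mul_mem s hs t ht =>
        rw [LieModule.lowerCentralSeries_succ]
        exact LieSubmodule.lie_mem_lie (x := (⟨s, hs⟩ : L)) (LieSubmodule.mem_top _) (ih t ht v)
      | add a ha b hb h1 h2 => exact add_mem h1 h2
  rw [eq_bot_iff]
  intro T hT
  rw [Submodule.mem_bot]
  ext v
  have := this k T hT v
  rw [hk] at this
  simpa using this

end eng

section ac
variable {K J : Type*} [Field K] [CharZero K] [NonUnitalNonAssocRing J] [Module K J] [SMulCommClass K J J]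
    [IsScalarTower K J J] [FiniteDimensional K J]

theorem L_nil (comm : ∀ x y : J, x * y = y * x)
    (lin : ∀ x y z w : J, (x*y)*(z*w)+(y*z)*(x*w)+(z*x)*(y*w) = ((x*y)*w)*z+((y*z)*w)*x+((z*x)*w)*y)
    (tr : ∀ x : J, LinearMap.trace K J (LinearMap.mul K J x) = 0) (x : J) :
    IsNilpotent (LinearMap.mul K J x) := by
  set L := LinearMap.mul K J with hL
  have h3 : ∀ w, (x*x)*(x*w) = x*((x*x)*w) := by
    intro w
    have := lin x x x w
    apply smul_right_injective J (three_ne_zero (α := K))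
    simp only [comm x (x*x*w)]
    linear_combination (norm := module) (1:K) • this
  have hAB : L x * L (x*x) = L (x*x) * L x := by
    ext w; exact (h3 w).symm
  let p : ℕ → J := fun n => Nat.rec x (fun _ u => x * u) n
  have p0 : p 0 = x := rfl
  have ps : ∀ n, p (n+1) = x * p n := fun n => rfl
  have rec0 : ∀ u, L (x * (x * u)) = L (x*u) * L x + L (x*u) * L x + L (x*x) * L u
      - L u * L x * L x - L x * L x * L u := by
    intro u
    ext v
    have := lin u v x x
    simp only [hL, LinearMap.add_apply, LinearMap.sub_apply, Module.End.mul_apply, LinearMap.mul_apply'] 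
    have e1 : (v*x)*(u*x) = (x*u)*(x*v) := by rw [comm v x, comm u x, comm (x*v)]
    have e2 : (x*u)*(v*x) = (x*u)*(x*v) := by rw [comm v x]
    have e3 : ((u*v)*x)*x = x*(x*(u*v)) := by rw [comm (u*v) x, comm _ x]
    have e4 : ((v*x)*x)*u = u*(x*(x*v)) := by rw [comm v x, comm (x*v) x, comm _ u]
    have e5 : ((x*u)*x)*v = (x*(x*u))*v := by rw [comm (x*u) x]
    rw [e1, e2, e3, e4, e5, comm (u*v) (x*x)] at this
    linear_combination (norm := abel) -this
  have hc : ∀ n, (L x * L (p n) = L (p n) * L x ∧ L (x*x) * L (p n) = L (p n) * L (x*x)) := by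
    intro n
    induction n using Nat.twoStepInduction with
    | zero => exact ⟨rfl, hAB.symm⟩
    | one => exact ⟨hAB, rfl⟩
    | more n h0 h1 =>
      have e : L (p (n+2)) = _ := rec0 (p n)
      rw [← ps] at e
      rw [e]
      have a1 : Commute (L x) (L (p n)) := h0.1
      have a2 : Commute (L (x*x)) (L (p n)) := h0.2
      have b1 : Commute (L x) (L (p (n+1))) := h1.1
      have b2 : Commute (L (x*x)) (L (p (n+1))) := h1.2
      have c1 : Commute (L x) (L (x*x)) := hAB
      have r1 := Commute.refl (L x)
      have r2 := Commute.refl (L (x*x))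
      have c2 := c1.symm
      exact ⟨((((b1.mul_right r1).add_right (b1.mul_right r1)).add_right (c1.mul_right a1)).sub_right ((a1.mul_right r1).mul_right r1)).sub_right ((r1.mul_right r1).mul_right a1), ((((b2.mul_right c2).add_right (b2.mul_right c2)).add_right (r2.mul_right a2)).sub_right ((a2.mul_right c2).mul_right c2)).sub_right ((c2.mul_right c2).mul_right a2)⟩
  let P : ℕ → Module.End K J := fun n => Nat.casesOn n 1 (fun n => L (p n))
  let b := Module.finBasis K J
  let M := LinearMap.toMatrixAlgEquiv b
  have hnil : IsNilpotent (M (L x)) := by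
    refine mat_nil (M (L x)) (M (L (x*x))) ?_ (fun n => M (P n)) ?_ ?_ ?_ ?_
    · rw [← map_mul, hAB, map_mul]
    · exact map_one M
    · rfl
    · intro n
      have h2 : (2 : Matrix _ _ K) = M 2 := (map_ofNat M 2).symm
      simp only [h2, ← map_mul, ← map_sub, ← map_add]
      congr 1
      rcases n with _ | n
      · change L (x*x) = 2 * L x * L x + (L (x*x) - 2 * L x * L x) * 1
        noncomm_ring
      · change L (p (n+2)) = 2 * L x * L (p (n+1)) + (L (x*x) - 2 * L x * L x) * L (p n)
        have e : L (p (n+2)) = _ := rec0 (p n)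
        rw [e, ← ps, ← (hc (n+1)).1, ← (hc n).1, mul_assoc (L x) (L (p n)), ← (hc n).1]
        noncomm_ring
    · intro n
      change (M (L (p n))).trace = 0
      rw [← tr (p n), LinearMap.trace_eq_matrix_trace K b]; rfl
  exact (IsNilpotent.map_iff (f := M) M.injective).1 hnil

theorem ac_main [IsAlgClosed K] (comm : ∀ x y : J, x * y = y * x)
    (lin : ∀ x y z w : J, (x*y)*(z*w)+(y*z)*(x*w)+(z*x)*(y*w) = ((x*y)*w)*z+((y*z)*w)*x+((z*x)*w)*y)
    (d : J →ₗ[K] J) (hd : ∀ x y : J, d (x * y) = d x * y + x * d y)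
    (hbij : Function.Surjective d) : ∃ k : ℕ, (LinearMap.range (LinearMap.mul K J))^k = ⊥ := by
  set L := LinearMap.mul K J with hL
  have La : ∀ x y, L x y = x * y := fun x y => rfl
  have tr : ∀ x : J, LinearMap.trace K J (L x) = 0 := by
    intro x
    obtain ⟨y, rfl⟩ := hbij x
    have : L (d y) = d * L y - L y * d := by
      ext v; simp [La, hd]
    rw [this, map_sub, LinearMap.trace_mul_comm, sub_self]
  have nil := L_nil comm lin tr
  have trsq : ∀ x, LinearMap.trace K J (L x * L x) = 0 := fun x =>
    (LinearMap.isNilpotent_trace_of_isNilpotent ((Commute.refl _).isNilpotent_mul_right (nil x))).eq_zero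
  have trLL : ∀ x y, LinearMap.trace K J (L x * L y) = 0 := by
    intro x y
    have h := trsq (x+y)
    rw [map_add, add_mul, mul_add, mul_add, map_add, map_add, map_add, trsq, trsq,
      LinearMap.trace_mul_comm K (L y) (L x)] at h
    have h2 : (2:K) * LinearMap.trace K J (L x * L y) = 0 := by linear_combination h
    simpa using h2
  have derL : ∀ D : Module.End K J, (∀ x y, D (x * y) = D x * y + x * D y) → ∀ x, D * L x - L x * D = L (D x) := by
    intro D hD x
    ext v; simp [La, hD]
  let k : Submodule K (Module.End K J) := Submodule.span K {D | ∃ x y, D = L x * L y - L y * L x}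
  have hkmem : ∀ x y, L x * L y - L y * L x ∈ k := fun x y => Submodule.subset_span ⟨x, y, rfl⟩
  have kder : ∀ D ∈ k, ∀ x y, D (x * y) = D x * y + x * D y := by
    intro D hD
    induction hD using Submodule.span_induction with
    | mem D h =>
      obtain ⟨z, w, rfl⟩ := h
      intro x y
      have h1 := lin x y z w
      have h2 := lin x y w z
      simp only [LinearMap.sub_apply, Module.End.mul_apply, La]
      have e1 : (x*y)*(w*z) = (x*y)*(z*w) := by rw [comm w z]
      have e2 : (y*w)*(x*z) = (z*x)*(y*w) := by rw [comm x z, comm (y*w)]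
      have e3 : (w*x)*(y*z) = (y*z)*(x*w) := by rw [comm w x, comm (x*w)]
      have f1 : ((x*y)*w)*z = z*(w*(x*y)) := by rw [comm _ w, comm _ z]
      have f2 : ((y*z)*w)*x = x*(w*(z*y)) := by rw [comm y z, comm _ w, comm _ x]
      have f3 : ((z*x)*w)*y = (w*(z*x))*y := by rw [comm _ w]
      have g1 : ((x*y)*z)*w = w*(z*(x*y)) := by rw [comm _ z, comm _ w]
      have g2 : ((y*w)*z)*x = x*(z*(w*y)) := by rw [comm y w, comm _ z, comm _ x]
      have g3 : ((w*x)*z)*y = (z*(w*x))*y := by rw [comm _ z]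
      rw [f1, f2, f3] at h1
      rw [e1, e2, e3, g1, g2, g3] at h2
      rw [sub_mul, mul_sub]
      linear_combination (norm := abel) h2 - h1
    | zero => simp
    | add D E _ _ h1 h2 => intro x y; simp only [LinearMap.add_apply, h1, h2, add_mul, mul_add]; abel
    | smul c D _ h => intro x y; simp only [LinearMap.smul_apply, h, smul_add, smul_mul_assoc, mul_smul_comm]
  have ktr : ∀ D ∈ k, ∀ Y : Module.End K J, (∀ x y, Y (x * y) = Y x * y + x * Y y) →
      LinearMap.trace K J (D * Y) = 0 := by
    intro D hD Y hY
    induction hD using Submodule.span_induction with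
    | mem D h =>
      obtain ⟨z, w, rfl⟩ := h
      have e := derL Y hY w
      have : (L z * L w - L w * L z) * Y = (L z * (L w * Y) - (L w * (L z * Y))) := by noncomm_ring
      rw [this, map_sub, LinearMap.trace_mul_comm K (L w), ← map_sub]
      have : L z * (L w * Y) - L z * Y * L w = - (L z * L (Y w)) := by rw [← e]; noncomm_ring
      rw [this, map_neg, trLL, neg_zero]
    | zero => simp
    | add D E _ _ h1 h2 => rw [add_mul, map_add, h1, h2, add_zero]
    | smul c D _ h => rw [smul_mul_assoc, map_smul, h, smul_zero]
  have knil : ∀ D ∈ k, IsNilpotent D := fun D hD => der_nil D (kder D hD) (ktr D hD)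
  have klie : ∀ a ∈ k, ∀ b ∈ k, a * b - b * a ∈ k := by
    intro D hD b hb
    induction hb using Submodule.span_induction with
    | mem E h =>
      obtain ⟨z, w, rfl⟩ := h
      have e1 := derL D (kder D hD) z
      have e2 := derL D (kder D hD) w
      have : D * (L z * L w - L w * L z) - (L z * L w - L w * L z) * D =
        (L (D z) * L w - L w * L (D z)) + (L z * L (D w) - L (D w) * L z) := by
        rw [← e1, ← e2]; noncomm_ring
      rw [this]; exact add_mem (hkmem _ _) (hkmem _ _)
    | zero => simp
    | add E E' _ _ h1 h2 =>
      have : D * (E + E') - (E + E') * D = (D * E - E * D) + (D * E' - E' * D) := by noncomm_ring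
      rw [this]; exact add_mem h1 h2
    | smul c E _ h =>
      rw [smul_mul_assoc, mul_smul_comm, ← smul_sub]; exact Submodule.smul_mem _ _ h
  obtain ⟨n, hn⟩ := engel_sub k klie knil
  let good : Set (Submodule K J) := {B | (∀ D ∈ k, ∀ b ∈ B, D b ∈ B) ∧ ∃ N, (B.map L ⊔ k)^N = ⊥}
  have hg0 : (⊥ : Submodule K J) ∈ good := by
    refine ⟨?_, n, by simpa using hn⟩
    intro D _ b hb
    rw [Submodule.mem_bot] at hb ⊢
    simp [hb]
  obtain ⟨B, hB, hmax⟩ := WellFounded.has_min (wellFounded_gt (α := Submodule K J)) good ⟨_, hg0⟩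
  have hBtop : B = ⊤ := by
    by_contra hne
    obtain ⟨y, hy, hky⟩ := exists_push k n hn B hne
    obtain ⟨m, hm⟩ := nil y
    obtain ⟨hB1, N, hN⟩ := hB
    refine hmax (B ⊔ Submodule.span K {y}) ⟨?_, ?_⟩ ?_
    · intro D hD b0 hb0
      obtain ⟨b, hb, c, hc, rfl⟩ := Submodule.mem_sup.1 hb0
      obtain ⟨r, rfl⟩ := Submodule.mem_span_singleton.1 hc
      refine Submodule.mem_sup_left ?_
      rw [map_add, map_smul]
      exact add_mem (hB1 D hD b hb) (Submodule.smul_mem _ _ (hky D hD))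
    · obtain ⟨N', hN'⟩ := ext_nil (B.map L ⊔ k) (L y) m N hm hN (by
        intro s hs
        obtain ⟨s1, hs1, D, hD, rfl⟩ := Submodule.mem_sup.1 hs
        obtain ⟨b, hb, rfl⟩ := hs1
        have e := derL D (kder D hD) y
        have : L y * (L b + D) - (L b + D) * L y = - L (D y) + (L y * L b - L b * L y) := by
          rw [← e]; noncomm_ring
        rw [this]
        exact Submodule.add_mem_sup (neg_mem (Submodule.mem_map_of_mem (hky D hD))) (hkmem _ _))
      refine ⟨N', ?_⟩
      rw [Submodule.map_sup, Submodule.map_span, Set.image_singleton, sup_right_comm]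
      exact hN'
    · refine lt_of_le_of_ne le_sup_left fun h => hy ?_
      rw [h]; exact Submodule.mem_sup_right (Submodule.mem_span_singleton_self y)
  obtain ⟨-, N, hN⟩ := hB
  refine ⟨N, ?_⟩
  rw [hBtop, Submodule.map_top] at hN
  exact le_bot_iff.1 (hN ▸ pow_le_pow_left' le_sup_left N)
end ac

section bc
open TensorProduct

theorem prod_small {K A : Type*} [Field K] [NonUnitalNonAssocRing A] [Module K A] [SMulCommClass K A A]
    [IsScalarTower K A A] (comm : ∀ x y : A, x * y = y * x) {n : ℕ} {x : A} (h : IsProd n x) :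
    ∀ k : ℕ, 2^k ≤ n → ∃ T ∈ (LinearMap.range (LinearMap.mul K A))^k, ∃ a, T a = x := by
  induction h with
  | single a =>
    intro k hk
    have : k = 0 := by
      by_contra h
      have := Nat.one_lt_two_pow h
      omega
    subst this
    exact ⟨1, by rw [pow_zero]; exact Submodule.one_le.1 le_rfl, a, rfl⟩
  | @mul m n u v _ _ h1 h2 =>
    intro k hk
    rcases k with _ | k
    · exact ⟨1, by rw [pow_zero]; exact Submodule.one_le.1 le_rfl, _, rfl⟩
    · have : 2^k ≤ m ∨ 2^k ≤ n := by
        rw [pow_succ] at hk; omega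
      rcases this with h | h
      · obtain ⟨T, hT, a, ha⟩ := h1 k h
        refine ⟨LinearMap.mul K A v * T, ?_, a, ?_⟩
        · rw [pow_succ']; exact Submodule.mul_mem_mul ⟨v, rfl⟩ hT
        · rw [Module.End.mul_apply, ha, LinearMap.mul_apply', comm]
      · obtain ⟨T, hT, a, ha⟩ := h2 k h
        refine ⟨LinearMap.mul K A u * T, ?_, a, ?_⟩
        · rw [pow_succ']; exact Submodule.mul_mem_mul ⟨u, rfl⟩ hT
        · rw [Module.End.mul_apply, ha, LinearMap.mul_apply']

theorem prod_bc {F K J : Type*} [Field F] [Field K] [Algebra F K] [NonUnitalNonAssocRing J] [Module F J]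
    [SMulCommClass F J J] [IsScalarTower F J J] {n : ℕ} {x : J} (h : IsProd n x) :
    IsProd n ((1 : K) ⊗ₜ[F] x) := by
  induction h with
  | single a => exact IsProd.single _
  | @mul m n u v _ _ h1 h2 =>
    have := IsProd.mul h1 h2
    rwa [Algebra.TensorProduct.tmul_mul_tmul, one_mul] at this

theorem bc_main {F J : Type*} (K : Type*) [Field F] [CharZero F] [Field K] [Algebra F K] [IsAlgClosed K]
    [NonUnitalNonAssocRing J] [Module F J] [SMulCommClass F J J] [IsScalarTower F J J]
    [FiniteDimensional F J]
    (comm : ∀ x y : J, x * y = y * x)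
    (lin : ∀ x y z w : J, (x*y)*(z*w)+(y*z)*(x*w)+(z*x)*(y*w) = ((x*y)*w)*z+((y*z)*w)*x+((z*x)*w)*y)
    (d : J →ₗ[F] J)
    (hd : ∀ x y : J, d (x * y) = d x * y + x * d y)
    (hbij : Function.Surjective d) :
    ∃ n : ℕ, 1 ≤ n ∧ ∀ x : J, IsProd n x → x = 0 := by
  haveI : CharZero K := charZero_of_injective_algebraMap (algebraMap F K).injective
  have commK : ∀ x y : K ⊗[F] J, x * y = y * x := by
    intro x y
    induction x using TensorProduct.induction_on with
    | zero => simp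
    | add a b ha hb => rw [add_mul, mul_add, ha, hb]
    | tmul a x =>
      induction y using TensorProduct.induction_on with
      | zero => simp
      | add a b ha hb => rw [add_mul, mul_add, ha, hb]
      | tmul b y => simp only [Algebra.TensorProduct.tmul_mul_tmul, comm x y, mul_comm a b]
  have linK : ∀ x y z w : K ⊗[F] J, (x*y)*(z*w)+(y*z)*(x*w)+(z*x)*(y*w) = ((x*y)*w)*z+((y*z)*w)*x+((z*x)*w)*y := by
    intro x y z w
    induction x using TensorProduct.induction_on with
    | zero => simp
    | add a b ha hb =>
      simp only [add_mul, mul_add]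
      linear_combination (norm := abel) ha + hb
    | tmul a x =>
      induction y using TensorProduct.induction_on with
      | zero => simp
      | add a b ha hb =>
        simp only [add_mul, mul_add]
        linear_combination (norm := abel) ha + hb
      | tmul b y =>
        induction z using TensorProduct.induction_on with
        | zero => simp
        | add a b ha hb =>
          simp only [add_mul, mul_add]
          linear_combination (norm := abel) ha + hb
        | tmul c z =>
          induction w using TensorProduct.induction_on with
          | zero => simp
          | add a b ha hb =>
            simp only [add_mul, mul_add]
            linear_combination (norm := abel) ha + hb
          | tmul e w =>
            simp only [Algebra.TensorProduct.tmul_mul_tmul]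
            rw [show b * c * (a * e) = a * b * (c * e) by ring, show c * a * (b * e) = a * b * (c * e) by ring,
              show a * b * e * c = a * b * (c * e) by ring, show b * c * e * a = a * b * (c * e) by ring,
              show c * a * e * b = a * b * (c * e) by ring]
            simp only [← TensorProduct.tmul_add]
            rw [lin]
  have hdK : ∀ x y : K ⊗[F] J, d.baseChange K (x * y) = d.baseChange K x * y + x * d.baseChange K y := by
    intro x y
    induction x using TensorProduct.induction_on with
    | zero => simp
    | add a b ha hb => rw [add_mul, map_add, ha, hb, map_add]; simp only [add_mul]; abel
    | tmul a x =>
      induction y using TensorProduct.induction_on with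
      | zero => simp
      | add a b ha hb => rw [mul_add, map_add, ha, hb, map_add]; simp only [mul_add]; abel
      | tmul b y =>
        simp only [Algebra.TensorProduct.tmul_mul_tmul, LinearMap.baseChange_tmul, hd, TensorProduct.tmul_add]
  have hs : Function.Surjective (d.baseChange K) := LinearMap.lTensor_surjective K hbij
  obtain ⟨k, hk⟩ := ac_main (K := K) (J := K ⊗[F] J) commK linK (d.baseChange K) hdK hs
  refine ⟨2^k, Nat.one_le_two_pow, fun x hx => ?_⟩
  obtain ⟨T, hT, a, ha⟩ := prod_small (K := K) commK (prod_bc (K := K) hx) k le_rfl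
  rw [hk, Submodule.mem_bot] at hT
  rw [hT, LinearMap.zero_apply] at ha
  have hinj : Function.Injective (TensorProduct.mk F K J 1) :=
    Module.FaithfullyFlat.tensorProduct_mk_injective J
  exact hinj (by rw [map_zero]; exact ha.symm)
end bc

/-- A finite-dimensional Jordan algebra over a field of characteristic zero admitting an
invertible (bijective) derivation is nilpotent. -/
theorem jordan_with_invertible_derivation_is_nilpotent
    {F J : Type*} [Field F] [CharZero F]
    [NonUnitalNonAssocRing J] [Module F J] [SMulCommClass F J J] [IsScalarTower F J J]
    [FiniteDimensional F J]
    (comm : ∀ x y : J, x * y = y * x)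
    (jordan : ∀ x y : J, ((x * x) * y) * x = (x * x) * (y * x))
    (d : J →ₗ[F] J)
    (hd : ∀ x y : J, d (x * y) = d x * y + x * d y)
    (hbij : Function.Bijective d) :
    ∃ n : ℕ, 1 ≤ n ∧ ∀ x : J, IsProd n x → x = 0 := by
  exact bc_main (AlgebraicClosure F) comm (lin_jordan (F := F) comm jordan) d hd hbij.surjective
end

section
/- Let J be a finite-dimensional Jordan algebra over a field F of characteristic not equal to 2, and suppose every F-linear endomorphism of J is a quasiderivation. Then either J has zero multiplication (x*y = 0 for all x, y ∈ J), or J is a field (J is nonzero, its multiplication is associative and has a unit element, and every nonzero element of J is invertible). -/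
/-- If `J` is a finite-dimensional Jordan algebra over a field of characteristic ≠ 2
in which every linear endomorphism is a quasiderivation, then `J` has zero
multiplication or `J` is a field. -/
theorem jordan_all_endomorphisms_quasiderivations
    {F J : Type*} [Field F] (hchar : ringChar F ≠ 2)
    [NonUnitalNonAssocRing J] [Module F J] [SMulCommClass F J J] [IsScalarTower F J J]
    [FiniteDimensional F J]
    (comm : ∀ x y : J, x * y = y * x)
    (jordan : ∀ x y : J, ((x * x) * y) * x = (x * x) * (y * x))
    (hq : ∀ f : J →ₗ[F] J, ∃ Q : J →ₗ[F] J, ∀ x y : J, Q (x * y) = f x * y + x * f y) :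
    (∀ x y : J, x * y = 0) ∨
      ((∃ x : J, x ≠ 0) ∧ (∀ x y z : J, (x * y) * z = x * (y * z)) ∧
        ∃ e : J, (∀ x : J, e * x = x ∧ x * e = x) ∧
          ∀ x : J, x ≠ 0 → ∃ y : J, x * y = e ∧ y * x = e) := by
  classical
  by_cases hz : ∀ x y : J, x * y = 0
  · exact Or.inl hz
  right
  have h2 : (2 : F) ≠ 0 := Ring.two_ne_zero hchar
  have h2J : ∀ v : J, v + v = 0 → v = 0 := by
    intro v hv
    rw [← two_smul F] at hv
    exact (smul_eq_zero.mp hv).resolve_left h2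
  -- separating functional
  have sep : ∀ x y : J, x ∉ Submodule.span F {y} → ∃ g : J →ₗ[F] F, g x = 1 ∧ g y = 0 := by
    intro x y hxy
    obtain ⟨g, hg, hk⟩ := Submodule.exists_le_ker_of_notMem hxy
    have hy : g y = 0 := hk (Submodule.mem_span_singleton_self y)
    exact ⟨(g x)⁻¹ • g, by simp [hg], by simp [hy]⟩
  have sep1 : ∀ x : J, x ≠ 0 → ∃ g : J →ₗ[F] F, g x = 1 := by
    intro x hx
    obtain ⟨g, hg, -⟩ := sep x 0 (by simpa using hx)
    exact ⟨g, hg⟩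
  have sq : ∀ x : J, x * x = 0 → x = 0 := by
    intro x hxx
    by_contra hx
    apply hz
    obtain ⟨g, hg⟩ := sep1 x hx
    have hxv : ∀ v, x * v = 0 := by
      intro v
      obtain ⟨Q, hQ⟩ := hq (g.smulRight v)
      have := hQ x x
      simp only [hxx, map_zero, LinearMap.smulRight_apply, hg, one_smul] at this
      rw [comm v x] at this
      exact h2J _ this.symm
    intro w v
    obtain ⟨Q, hQ⟩ := hq (g.smulRight w)
    have := hQ x v
    simp only [hxv, map_zero, LinearMap.smulRight_apply, hg, one_smul, add_zero] at this
    exact this.symm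
  have nzd : ∀ x y : J, x * y = 0 → x = 0 ∨ y = 0 := by
    intro x y hxy
    by_cases h : y ∈ Submodule.span F {x}
    · obtain ⟨a, rfl⟩ := Submodule.mem_span_singleton.mp h
      rw [mul_smul_comm, smul_eq_zero] at hxy
      rcases hxy with h | h
      · right; rw [h, zero_smul]
      · left; exact sq x h
    · obtain ⟨g, hgy, hgx⟩ := sep y x h
      obtain ⟨Q, hQ⟩ := hq (g.smulRight x)
      have := hQ x y
      simp only [hxy, map_zero, LinearMap.smulRight_apply, hgx, hgy, one_smul, zero_smul,
        zero_mul, zero_add] at this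
      left; exact sq x this.symm
  have hx : ∃ x : J, x ≠ 0 := by
    by_contra! h
    exact hz fun x y => h _
  obtain ⟨x, hx⟩ := hx
  have hinj : Function.Injective (LinearMap.mulLeft F x) := by
    rw [injective_iff_map_eq_zero]
    intro z hz'
    exact (nzd x z hz').resolve_left hx
  have hsurj := LinearMap.injective_iff_surjective.mp hinj
  have hdim : ∀ y : J, x ∈ Submodule.span F {y} ∨ y = 0 := by
    intro y
    by_contra! h
    obtain ⟨hxy, hy⟩ := h
    obtain ⟨g, hgx, hgy⟩ := sep x y hxy
    obtain ⟨z, hzy⟩ := hsurj (y * y)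
    rw [LinearMap.mulLeft_apply] at hzy
    obtain ⟨Q, hQ⟩ := hq (g.smulRight x)
    have h1 := hQ x z
    have h3 := hQ y y
    simp only [LinearMap.smulRight_apply, hgx, hgy, one_smul, zero_smul, zero_mul, mul_zero,
      add_zero] at h1 h3
    rw [hzy, h3, ← hzy, ← mul_add] at h1
    have h4 := (nzd _ _ h1.symm).resolve_left hx
    have h5 := congrArg g h4
    simp only [map_add, map_smul, hgx, map_zero, smul_eq_mul, mul_one] at h5
    rw [← two_mul] at h5
    have h6 := (mul_eq_zero.mp h5).resolve_left h2
    rw [h6, zero_smul, add_zero] at h4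
    rw [h4, mul_zero] at hzy
    exact hy (sq y hzy.symm)
  have hmul : ∀ y : J, ∃ a : F, y = a • x := by
    intro y
    rcases hdim y with h | h
    · obtain ⟨a, ha⟩ := Submodule.mem_span_singleton.mp h
      have ha0 : a ≠ 0 := by
        rintro rfl
        exact hx (by rw [← ha, zero_smul])
      exact ⟨a⁻¹, by rw [← ha, smul_smul, inv_mul_cancel₀ ha0, one_smul]⟩
    · exact ⟨0, by rw [h, zero_smul]⟩
  obtain ⟨c, hc⟩ := hmul (x * x)
  have hc0 : c ≠ 0 := by
    rintro rfl
    exact hx (sq x (by rw [hc, zero_smul]))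
  refine ⟨⟨x, hx⟩, ?_, c⁻¹ • x, ?_, ?_⟩
  · intro u v w
    obtain ⟨a, rfl⟩ := hmul u
    obtain ⟨b, rfl⟩ := hmul v
    obtain ⟨d, rfl⟩ := hmul w
    simp only [smul_mul_assoc, mul_smul_comm, hc, smul_smul]
    congr 1; ring
  · intro u
    obtain ⟨a, rfl⟩ := hmul u
    simp only [smul_mul_assoc, mul_smul_comm, hc, smul_smul]
    constructor <;> congr 1 <;> field_simp
  · intro u hu
    obtain ⟨a, rfl⟩ := hmul u
    have ha : a ≠ 0 := by
      rintro rfl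
      exact hu (zero_smul _ _)
    refine ⟨(a⁻¹ * c⁻¹ * c⁻¹) • x, ?_⟩
    simp only [smul_mul_assoc, mul_smul_comm, hc, smul_smul]
    constructor <;> congr 1 <;> field_simp
end

section
/- Let A be a finite-dimensional alternative algebra over a field F of characteristic not equal to 2, and suppose every F-linear endomorphism of A is a quasiderivation. Then either A has zero multiplication (x*y = 0 for all x, y ∈ A), or A is a field (A is nonzero, its multiplication is associative and commutative and has a unit element, and every nonzero element of A is invertible). -/
theorem aux_ext1 {F A : Type*} [Field F] [AddCommGroup A] [Module F A] {x : A} (hx : x ≠ 0)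
    (a : A) : ∃ f : A →ₗ[F] A, f x = a := by
  have hi : LinearIndependent F ![x] := by
    rw [linearIndependent_unique_iff]; simpa using hx
  obtain ⟨g, hg⟩ := LinearMap.exists_leftInverse_of_injective
    (Finsupp.linearCombination F ![x]) (LinearMap.ker_eq_bot.2 hi)
  refine ⟨(Finsupp.linearCombination F ![a]) ∘ₗ g, ?_⟩
  have h0 := LinearMap.congr_fun hg (Finsupp.single 0 1)
  simp at h0
  simp [h0]

theorem aux_ext2 {F A : Type*} [Field F] [AddCommGroup A] [Module F A] {x y : A}
    (hi : LinearIndependent F ![x, y])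
    (a b : A) : ∃ f : A →ₗ[F] A, f x = a ∧ f y = b := by
  obtain ⟨g, hg⟩ := LinearMap.exists_leftInverse_of_injective
    (Finsupp.linearCombination F ![x, y]) (LinearMap.ker_eq_bot.2 hi)
  refine ⟨(Finsupp.linearCombination F ![a, b]) ∘ₗ g, ?_, ?_⟩
  · have h0 := LinearMap.congr_fun hg (Finsupp.single 0 1)
    simp at h0
    simp [h0]
  · have h0 := LinearMap.congr_fun hg (Finsupp.single 1 1)
    simp at h0
    simp [h0]

/-- If `A` is a finite-dimensional alternative algebra over a field of characteristic ≠ 2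
in which every linear endomorphism is a quasiderivation, then `A` has zero
multiplication or `A` is a field. -/
theorem alternative_all_endomorphisms_quasiderivations
    {F A : Type*} [Field F] (hchar : ringChar F ≠ 2)
    [NonUnitalNonAssocRing A] [Module F A] [SMulCommClass F A A] [IsScalarTower F A A]
    [FiniteDimensional F A]
    (alt1 : ∀ x y : A, (x * x) * y = x * (x * y))
    (alt2 : ∀ x y : A, (x * y) * y = x * (y * y))
    (hq : ∀ f : A →ₗ[F] A, ∃ Q : A →ₗ[F] A, ∀ x y : A, Q (x * y) = f x * y + x * f y) :
    (∀ x y : A, x * y = 0) ∨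
      ((∃ x : A, x ≠ 0) ∧ (∀ x y z : A, (x * y) * z = x * (y * z)) ∧
        (∀ x y : A, x * y = y * x) ∧
        ∃ e : A, (∀ x : A, e * x = x ∧ x * e = x) ∧
          ∀ x : A, x ≠ 0 → ∃ y : A, x * y = e ∧ y * x = e) := by
  have h2 : (2 : F) ≠ 0 := Ring.two_ne_zero hchar
  by_cases hz : ∀ x y : A, x * y = 0
  · exact Or.inl hz
  right
  -- independent elements have nonzero product
  have hind : ∀ x y : A, LinearIndependent F ![x, y] → x * y ≠ 0 := by
    intro x y hi hxy
    apply hz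
    have hy : y ≠ 0 := hi.ne_zero 1
    have hzy : ∀ z, z * y = 0 := by
      intro z
      obtain ⟨f, hf1, hf2⟩ := aux_ext2 hi z 0
      obtain ⟨Q, hQ⟩ := hq f
      have := hQ x y
      rw [hxy, hf1, hf2] at this
      simpa using this.symm
    intro z w
    obtain ⟨f, hf⟩ := aux_ext1 (F := F) hy w
    obtain ⟨Q, hQ⟩ := hq f
    have := hQ z y
    rw [hzy, hf, hzy] at this
    simpa using this.symm
  have hsq : ∀ x : A, x ≠ 0 → x * x ≠ 0 := by
    intro x hx hxx
    have h1 : ∀ y, y * x + x * y = 0 := by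
      intro y
      obtain ⟨f, hf⟩ := aux_ext1 (F := F) hx y
      obtain ⟨Q, hQ⟩ := hq f
      have := hQ x x
      rw [hxx, hf] at this
      simpa using this.symm
    have hanti : ∀ y z : A, y * z + z * y = 0 := by
      intro y z
      obtain ⟨f, hf⟩ := aux_ext1 (F := F) hx z
      obtain ⟨Q, hQ⟩ := hq f
      have e1 := hQ y x
      have e2 := hQ x y
      have e3 := congrArg Q (h1 y)
      rw [map_add, e1, e2, hf, map_zero] at e3
      have e4 := h1 (f y)
      calc y * z + z * y = (f y * x + y * z + (z * y + x * f y)) - (f y * x + x * f y) := by abel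
        _ = 0 := by rw [e3, e4, sub_zero]
    have hsq0 : ∀ y : A, y * y = 0 := by
      intro y
      have := hanti y y
      rw [← two_smul F] at this
      exact (smul_eq_zero.1 this).resolve_left h2
    have hdep : ∀ y z : A, y ≠ 0 → ∃ c : F, c • y = y * z := by
      intro y z hy
      by_contra hc
      push Not at hc
      refine hind y (y * z) ((LinearIndependent.pair_iff' hy).2 hc) ?_
      rw [← alt1, hsq0, zero_mul]
    apply hz
    intro y z
    by_contra hyz
    have hy : y ≠ 0 := by rintro rfl; simp at hyz
    have hz' : z ≠ 0 := by rintro rfl; simp at hyz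
    obtain ⟨c, hc⟩ := hdep y z hy
    obtain ⟨d, hd⟩ := hdep z y hz'
    have hcz : c ≠ 0 := by rintro rfl; rw [zero_smul] at hc; exact hyz hc.symm
    have h3 := hanti y z
    rw [← hc, ← hd] at h3
    have h4 : y = (-(c⁻¹ * d)) • z := by
      have h5 : c • y = -(d • z) := eq_neg_of_add_eq_zero_left h3
      have : c⁻¹ • (c • y) = c⁻¹ • (-(d • z)) := by rw [h5]
      rw [smul_smul, inv_mul_cancel₀ hcz, one_smul] at this
      rw [this, neg_smul, mul_smul, smul_neg]
    apply hyz
    rw [h4, smul_mul_assoc, hsq0, smul_zero]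
  have hdiv : ∀ x y : A, x ≠ 0 → y ≠ 0 → x * y ≠ 0 := by
    intro x y hx hy
    by_cases hi : LinearIndependent F ![x, y]
    · exact hind x y hi
    · rw [LinearIndependent.pair_iff' hx] at hi
      push Not at hi
      obtain ⟨a, rfl⟩ := hi
      rw [mul_smul_comm]
      exact smul_ne_zero (by rintro rfl; simp at hy) (hsq x hx)
  have hdim : ∀ x y : A, x ≠ 0 → ∃ a : F, a • x = y := by
    intro x y hx
    by_contra hc
    push Not at hc
    have hi := (LinearIndependent.pair_iff' hx).2 hc
    have hy : y ≠ 0 := hi.ne_zero 1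
    have hinj : Function.Injective (LinearMap.mulLeft F x) := by
      rw [injective_iff_map_eq_zero]
      intro w hw
      by_contra hw0
      exact hdiv x w hx hw0 hw
    obtain ⟨z, hz1⟩ := LinearMap.injective_iff_surjective.1 hinj (y * y)
    rw [LinearMap.mulLeft_apply] at hz1
    have hzm : z ∈ Submodule.span F {x, y} := by
      by_contra hzn
      obtain ⟨φ, hφ1, hφ2⟩ := Submodule.exists_le_ker_of_notMem hzn
      have hφx : φ x = 0 := hφ2 (Submodule.subset_span (by simp))
      have hφy : φ y = 0 := hφ2 (Submodule.subset_span (by simp))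
      obtain ⟨Q, hQ⟩ := hq (φ.smulRight x)
      have e1 := hQ x z
      have e2 := hQ y y
      rw [hz1, e2] at e1
      simp [hφx, hφy] at e1
      exact hdiv x _ hx (smul_ne_zero hφ1 hx) (by first | exact e1 | exact e1.symm)
    obtain ⟨a, b, rfl⟩ := Submodule.mem_span_pair.1 hzm
    obtain ⟨f, hf1, hf2⟩ := aux_ext2 hi 0 y
    obtain ⟨Q, hQ⟩ := hq f
    have e1 := hQ x (a • x + b • y)
    have e2 := hQ y y
    rw [hz1, e2] at e1
    simp only [map_add, map_smul, hf1, hf2, smul_zero, zero_add, zero_mul] at e1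
    have e3 : ((2 : F) • y - b • x) * y = 0 := by
      rw [sub_mul, smul_mul_assoc, smul_mul_assoc, two_smul, e1, mul_smul_comm, sub_self]
    have e4 : (2 : F) • y - b • x = 0 := by
      by_contra h
      exact hdiv _ _ h hy e3
    apply hc ((2 : F)⁻¹ * b)
    rw [mul_smul, ← sub_eq_zero.1 e4, smul_smul, inv_mul_cancel₀ h2, one_smul]
  push Not at hz
  obtain ⟨x, y, hxy⟩ := hz
  have hx : x ≠ 0 := by rintro rfl; simp at hxy
  obtain ⟨c, hc⟩ := hdim x (x * x) hx
  have hcz : c ≠ 0 := by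
    rintro rfl
    rw [zero_smul] at hc
    exact hsq x hx hc.symm
  have hee : (c⁻¹ • x) * (c⁻¹ • x) = c⁻¹ • x := by
    rw [smul_mul_assoc, mul_smul_comm, ← hc, smul_smul c⁻¹ c, inv_mul_cancel₀ hcz, one_smul]
  have he : c⁻¹ • x ≠ 0 := smul_ne_zero (inv_ne_zero hcz) hx
  generalize c⁻¹ • x = e at hee he
  have hE : ∀ y, ∃ a : F, a • e = y := fun y => hdim e y he
  refine ⟨⟨x, hx⟩, ?_, ?_, e, ?_, ?_⟩
  · intro x y z
    obtain ⟨a, rfl⟩ := hE x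
    obtain ⟨b, rfl⟩ := hE y
    obtain ⟨d, rfl⟩ := hE z
    simp only [smul_mul_assoc, mul_smul_comm, hee]
  · intro x y
    obtain ⟨a, rfl⟩ := hE x
    obtain ⟨b, rfl⟩ := hE y
    simp only [smul_mul_assoc, mul_smul_comm, hee]
    rw [smul_comm]
  · intro x
    obtain ⟨a, rfl⟩ := hE x
    simp only [smul_mul_assoc, mul_smul_comm, hee, and_self]
  · intro x hx
    obtain ⟨a, rfl⟩ := hE x
    have ha : a ≠ 0 := by rintro rfl; simp at hx
    refine ⟨a⁻¹ • e, ?_, ?_⟩ <;>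
      simp [smul_mul_assoc, mul_smul_comm, hee, smul_smul, ha]
end

section
/- Let J be a (not necessarily associative) algebra over a field F such that every F-linear endomorphism of J is a quasiderivation. If the annihilator Ann(J) = {a ∈ J | a*J = 0 and J*a = 0} contains a nonzero element, then J has zero multiplication: x*y = 0 for all x, y ∈ J. -/
/-- If every linear endomorphism of an algebra `J` is a quasiderivation and the
annihilator of `J` contains a nonzero element, then `J` has zero multiplication. -/
theorem zero_mul_of_nonzero_annihilator
    {F J : Type*} [Field F]
    [NonUnitalNonAssocRing J] [Module F J] [SMulCommClass F J J] [IsScalarTower F J J]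
    (hq : ∀ f : J →ₗ[F] J, ∃ Q : J →ₗ[F] J, ∀ x y : J, Q (x * y) = f x * y + x * f y)
    (hann : ∃ a : J, a ≠ 0 ∧ ∀ x : J, a * x = 0 ∧ x * a = 0) :
    ∀ x y : J, x * y = 0 := by
  obtain ⟨a, ha, h⟩ := hann
  intro x y
  obtain ⟨φ, hφ⟩ : ∃ φ : J →ₗ[F] F, φ a ≠ 0 := by
    by_contra! hc
    exact ha ((Module.forall_dual_apply_eq_zero_iff F a).1 hc)
  obtain ⟨Q, hQ⟩ := hq (((φ a)⁻¹ • φ).smulRight x)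
  have h1 := hQ a y
  rw [(h y).1, (h _).1] at h1
  simpa [hφ] using h1.symm
end

section
/- Let J be a finite-dimensional Jordan algebra over a field F of characteristic not equal to 2 such that every F-linear endomorphism of J is a quasiderivation. If there exists x ∈ J with x ≠ 0 and x*x = 0, then J has zero multiplication: a*b = 0 for all a, b ∈ J. -/
/-- If `J` is a finite-dimensional Jordan algebra over a field of characteristic ≠ 2 in
which every linear endomorphism is a quasiderivation, and `J` contains a nonzero element
`x` with `x * x = 0`, then `J` has zero multiplication. -/
theorem jordan_zero_mul_of_nilpotent_element
    {F J : Type*} [Field F] (hchar : ringChar F ≠ 2)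
    [NonUnitalNonAssocRing J] [Module F J] [SMulCommClass F J J] [IsScalarTower F J J]
    [FiniteDimensional F J]
    (comm : ∀ x y : J, x * y = y * x)
    (jordan : ∀ x y : J, ((x * x) * y) * x = (x * x) * (y * x))
    (hq : ∀ f : J →ₗ[F] J, ∃ Q : J →ₗ[F] J, ∀ x y : J, Q (x * y) = f x * y + x * f y)
    (hx : ∃ x : J, x ≠ 0 ∧ x * x = 0) :
    ∀ a b : J, a * b = 0 := by
  obtain ⟨x, hx0, hxx⟩ := hx
  have h2 : (2 : F) ≠ 0 := Ring.two_ne_zero hchar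
  have ext : ∀ a : J, ∃ f : J →ₗ[F] J, f x = a := by
    intro a
    have h1 : ∃ g : Module.Dual F J, g x ≠ 0 := by
      by_contra h
      push Not at h
      exact hx0 ((Module.forall_dual_apply_eq_zero_iff F x).1 h)
    obtain ⟨g, hg⟩ := h1
    refine ⟨g.smulRight ((g x)⁻¹ • a), ?_⟩
    simp [smul_smul, mul_inv_cancel₀ hg]
  have hxz : ∀ a : J, x * a = 0 := by
    intro a
    obtain ⟨f, rfl⟩ := ext a
    obtain ⟨Q, hQ⟩ := hq f
    have h := hQ x x
    rw [hxx, map_zero, comm (f x) x, ← two_smul F] at h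
    exact (smul_eq_zero.1 h.symm).resolve_left h2
  intro a b
  obtain ⟨f, rfl⟩ := ext a
  obtain ⟨Q, hQ⟩ := hq f
  have h := hQ x b
  rw [hxz, hxz, map_zero, add_zero] at h
  exact h.symm
end

section
/- Let A be an alternative algebra over a field F of characteristic not equal to 2. If A is anticommutative (x*y = −y*x for all x, y ∈ A) and every F-linear endomorphism of A is a quasiderivation, then A has zero multiplication: x*y = 0 for all x, y ∈ A. -/
/-- An anticommutative alternative algebra over a field of characteristic ≠ 2 in which
every linear endomorphism is a quasiderivation has zero multiplication. -/
theorem anticommutative_alternative_quasiderivations_zero_mul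
    {F A : Type*} [Field F] (hchar : ringChar F ≠ 2)
    [NonUnitalNonAssocRing A] [Module F A] [SMulCommClass F A A] [IsScalarTower F A A]
    (alt1 : ∀ x y : A, (x * x) * y = x * (x * y))
    (alt2 : ∀ x y : A, (x * y) * y = x * (y * y))
    (hanti : ∀ x y : A, x * y = -(y * x))
    (hq : ∀ f : A →ₗ[F] A, ∃ Q : A →ₗ[F] A, ∀ x y : A, Q (x * y) = f x * y + x * f y) :
    ∀ x y : A, x * y = 0 := by
  have h2 : (2 : F) ≠ 0 := Ring.two_ne_zero hchar
  have sq : ∀ x : A, x * x = 0 := by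
    intro x
    have h : (2 : F) • (x * x) = 0 := by
      rw [two_smul]
      nth_rewrite 1 [hanti x x]
      exact neg_add_cancel _
    exact (smul_eq_zero.mp h).resolve_left h2
  have l0 : ∀ x y : A, x * (x * y) = 0 := by
    intro x y
    rw [← alt1, sq, zero_mul]
  intro a b
  by_contra hab
  by_cases hc : a * b ∈ Submodule.span F {a}
  · obtain ⟨r, hr⟩ := Submodule.mem_span_singleton.mp hc
    have h1 : b * (b * a) = 0 := l0 b a
    have h3 : b * a = -(r • a) := by rw [hanti b a, hr]
    have h4 : b * (b * a) = r • r • a := by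
      rw [h3, mul_neg, mul_smul_comm, h3, smul_neg, neg_neg]
    rw [h4] at h1
    have h5 : r • a = 0 := by
      rcases smul_eq_zero.mp h1 with h | h
      · rw [h, zero_smul]
      · exact h
    exact hab (by rw [← hr, h5])
  · obtain ⟨φ, hφ, hk⟩ := Submodule.exists_le_ker_of_notMem hc
    have ha : φ a = 0 := hk (Submodule.mem_span_singleton_self a)
    obtain ⟨Q, hQ⟩ := hq (φ.smulRight b)
    have h := hQ a (a * b)
    rw [l0, map_zero, LinearMap.smulRight_apply, LinearMap.smulRight_apply, ha, zero_smul,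
      zero_mul, zero_add, mul_smul_comm] at h
    exact (smul_eq_zero.mp h.symm).elim hφ hab
end
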